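/- arXiv:2109.03288 — 2 statements merged into one kernel-verified Lean document; each statement's English description precedes it below -/
import Mathlib

section
/- Let q be an odd prime, m a divisor of (q−1)/2, and h = (q−1)/m. Then for every real α with 3 ≤ α ≤ q−1, S(m,q) < α₁·log q/((q−1)^{1/m}−1) + (8/7)·log(m·α²)/q^{1/m} + 1.053/(q−2.1) + q²·log 2/(2(2^{α/2}−1)) + log q/((q−1)^{2/m}−1), where α₁ = min{(ν₂(h)−1)/2, log α/log 4} and ν₂ denotes the 2-adic valuation. Moreover, if α is at most twice the smallest odd prime factor of h, the second term (8/7)·log(m·α²)/q^{1/m} can be omitted, and if m = 1 the final term log q/((q−1)^{2/m}−1) can be omitted. -/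
open Filter Topology

/-- The multiplicative order `g_p` of `p^m` modulo `q`. -/
noncomputable def gp (q m p : ℕ) : ℕ := orderOf ((p : ZMod q) ^ m)

/-- The local term at a prime `p` of the prime sum `S(m,q)` of the paper. -/
noncomputable def Sterm (q m p : ℕ) : ℝ :=
  if p = q then 0 else
    (if gp q m p = 1 then
        (q : ℝ) * Real.log p / ((p : ℝ) ^ q - 1)
          - ((q : ℝ) - 1) * Real.log p / ((p : ℝ) ^ (q - 1) - 1)
      else 0)
    + (if 3 ≤ gp q m p then
        (gp q m p : ℝ) * Real.log p / ((p : ℝ) ^ gp q m p - 1)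
          - ((gp q m p : ℝ) - 1) * Real.log p / ((p : ℝ) ^ (gp q m p - 1) - 1)
      else 0)
    + (if gp q m p = 2 then Real.log p / ((p : ℝ) ^ 2 - 1) else 0)
    + (if 4 ≤ gp q m p ∧ 2 ∣ gp q m p then
        Real.log p / ((p : ℝ) ^ (gp q m p / 2) - ((p : ℝ) ^ (gp q m p / 2))⁻¹)
      else 0)

/-- The prime sum `S(m,q)` of the paper (a sum over all primes `p ≠ q`). -/
noncomputable def Smq (q m : ℕ) : ℝ := ∑' p : Nat.Primes, Sterm q m (p : ℕ)

lemma sq_sub_one_div_sq_add_one_le_log {x : ℝ} (hx : 1 ≤ x) :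
    (x ^ 2 - 1) / (x ^ 2 + 1) ≤ Real.log x := by
  have h0 : 0 < x := by linarith
  have key : MonotoneOn (fun x : ℝ => Real.log x - (x ^ 2 - 1) / (x ^ 2 + 1)) (Set.Ici 1) := by
    have hd : ∀ x : ℝ, 1 ≤ x → HasDerivAt (fun x : ℝ => Real.log x - (x ^ 2 - 1) / (x ^ 2 + 1))
        (x⁻¹ - (2 * x * (x ^ 2 + 1) - (x ^ 2 - 1) * (2 * x)) / (x ^ 2 + 1) ^ 2) x := by
      intro x hx
      have h1 : HasDerivAt (fun x : ℝ => x ^ 2 - 1) (2 * x) x := by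
        simpa using (hasDerivAt_pow 2 x).sub_const 1
      have h2 : HasDerivAt (fun x : ℝ => x ^ 2 + 1) (2 * x) x := by
        simpa using (hasDerivAt_pow 2 x).add_const 1
      exact (Real.hasDerivAt_log (by linarith)).sub (h1.div h2 (by positivity))
    apply monotoneOn_of_deriv_nonneg (convex_Ici 1)
    · exact fun x hx => (hd x hx).continuousAt.continuousWithinAt
    · intro x hx
      rw [interior_Ici] at hx
      exact (hd x (le_of_lt hx)).differentiableAt.differentiableWithinAt
    · intro x hx
      rw [interior_Ici] at hx
      have hx1 : 1 < x := hx
      rw [(hd x hx1.le).deriv]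
      have : x⁻¹ - (2 * x * (x ^ 2 + 1) - (x ^ 2 - 1) * (2 * x)) / (x ^ 2 + 1) ^ 2
          = (x ^ 2 - 1) ^ 2 / (x * (x ^ 2 + 1) ^ 2) := by
        field_simp
        ring
      rw [this]
      positivity
  have := key (Set.mem_Ici.2 le_rfl) (Set.mem_Ici.2 hx) hx
  simp at this
  linarith

/-- The function `log x / (x - x⁻¹)` decreases on `(1, ∞)`. -/
lemma antitoneOn_log_div_sub_inv :
    AntitoneOn (fun x : ℝ => Real.log x / (x - x⁻¹)) (Set.Ioi 1) := by
  have hpos : ∀ x : ℝ, 1 < x → 0 < x - x⁻¹ := fun x hx => by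
    have := inv_lt_one_of_one_lt₀ hx
    linarith
  have hd : ∀ x : ℝ, 1 < x → HasDerivAt (fun x : ℝ => Real.log x / (x - x⁻¹))
      ((x⁻¹ * (x - x⁻¹) - Real.log x * (1 - -(x ^ 2)⁻¹)) / (x - x⁻¹) ^ 2) x := by
    intro x hx
    exact (Real.hasDerivAt_log (by linarith)).div
      ((hasDerivAt_id x).sub (hasDerivAt_inv (by linarith))) (hpos x hx).ne'
  apply antitoneOn_of_deriv_nonpos (convex_Ioi 1)
  · exact fun x hx => (hd x hx).continuousAt.continuousWithinAt
  · intro x hx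
    rw [interior_Ioi] at hx
    exact (hd x hx).differentiableAt.differentiableWithinAt
  · intro x hx
    rw [interior_Ioi] at hx
    have hx1 : 1 < x := hx
    rw [(hd x hx).deriv]
    apply div_nonpos_of_nonpos_of_nonneg _ (sq_nonneg _)
    have h := sq_sub_one_div_sq_add_one_le_log hx1.le
    rw [div_le_iff₀ (by positivity)] at h
    have : x⁻¹ * (x - x⁻¹) - Real.log x * (1 - -(x ^ 2)⁻¹)
        = ((x ^ 2 - 1) - Real.log x * (x ^ 2 + 1)) / x ^ 2 := by
      field_simp
      ring
    rw [this]
    exact div_nonpos_of_nonpos_of_nonneg (by linarith) (by positivity)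

lemma log_div_sq_sub_one_le {x y : ℝ} (hx : 1 < x) (hxy : x ≤ y) :
    Real.log y / (y ^ 2 - 1) ≤ Real.log x / (x ^ 2 - 1) := by
  have hy : 1 < y := by linarith
  have h := antitoneOn_log_div_sub_inv (Set.mem_Ioi.2 hx) (Set.mem_Ioi.2 hy) hxy
  have e : ∀ z : ℝ, 1 < z → Real.log z / (z ^ 2 - 1) = Real.log z / (z - z⁻¹) * z⁻¹ := by
    intro z hz
    have : z ^ 2 - 1 = (z - z⁻¹) * z := by field_simp
    rw [this, div_mul_eq_div_div]; rfl
  rw [e x hx, e y hy]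
  have hpos : 0 ≤ Real.log x / (x - x⁻¹) := by
    have := inv_lt_one_of_one_lt₀ hx
    exact div_nonneg (Real.log_nonneg hx.le) (by linarith)
  exact mul_le_mul h (inv_anti₀ (by linarith) hxy) (by positivity) hpos

lemma log_add_div_le_log_add {n d : ℝ} (hn : 0 < n) (hd : 0 ≤ d) :
    Real.log (n + d) - Real.log n ≤ d / n := by
  rw [← Real.log_div (by positivity) (by positivity)]
  have := Real.log_le_sub_one_of_pos (show 0 < (n + d) / n by positivity)
  have e : (n + d) / n - 1 = d / n := by field_simp; ring
  linarith

/-- Telescoping bound for `∑ log n / (n² - 1)` over odd `n ≥ N`. -/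
lemma sum_odd_log_div_le (s : Finset ℕ) (N : ℕ) (hN : 2 ≤ N) (hNodd : Odd N)
    (hs : ∀ n ∈ s, Odd n ∧ N ≤ n) :
    ∑ n ∈ s, Real.log n / ((n : ℝ) ^ 2 - 1) ≤ (Real.log N + 1) / (2 * ((N : ℝ) - 1)) := by
  set F : ℕ → ℝ := fun i =>
    (Real.log ((N : ℝ) + 2 * i) + 1) / (2 * ((N : ℝ) + 2 * i - 1)) with hF
  have hN' : (2 : ℝ) ≤ N := by exact_mod_cast hN
  have step : ∀ i : ℕ, Real.log ((N + 2 * i : ℕ) : ℝ) / (((N + 2 * i : ℕ) : ℝ) ^ 2 - 1)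
      ≤ F i - F (i + 1) := by
    intro i
    simp only [hF]
    push_cast
    set n : ℝ := (N : ℝ) + 2 * i with hn
    have hn2 : 2 ≤ n := by
      have : (0 : ℝ) ≤ i := Nat.cast_nonneg i
      linarith
    have e : (N : ℝ) + 2 * (i + 1) = n + 2 := by rw [hn]; ring
    rw [e]
    have hl := log_add_div_le_log_add (show 0 < n by linarith) (show (0 : ℝ) ≤ 2 by norm_num)
    have h1 : 0 < n - 1 := by linarith
    have h3 : 0 < n ^ 2 - 1 := by nlinarith
    have e2 : (Real.log n + 1) / (2 * (n - 1)) - (Real.log (n + 2) + 1) / (2 * (n + 2 - 1))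
        = ((Real.log n + 1) * (n + 1) - (Real.log (n + 2) + 1) * (n - 1)) / (2 * (n ^ 2 - 1)) := by
      have : n + 2 - 1 ≠ 0 := by linarith
      have : n - 1 ≠ 0 := h1.ne'
      have : n ^ 2 - 1 ≠ 0 := h3.ne'
      field_simp
      ring
    rw [e2, div_le_div_iff₀ h3 (by positivity)]
    have h4 : (Real.log (n + 2) - Real.log n) * (n - 1) ≤ 2 := by
      calc (Real.log (n + 2) - Real.log n) * (n - 1) ≤ 2 / n * (n - 1) := by gcongr
        _ ≤ 2 := by
          rw [div_mul_eq_mul_div, div_le_iff₀ (by linarith)]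
          linarith
    nlinarith
  have hsub : s ⊆ (Finset.range (s.sup id + 1)).image (fun i => N + 2 * i) := by
    intro n hn
    obtain ⟨h1, h2⟩ := hs n hn
    have h3 : n ≤ s.sup id := Finset.le_sup (f := id) hn
    rw [Finset.mem_image]
    obtain ⟨a, ha⟩ := h1
    obtain ⟨b, hb⟩ := hNodd
    exact ⟨a - b, by rw [Finset.mem_range]; omega, by omega⟩
  calc ∑ n ∈ s, Real.log n / ((n : ℝ) ^ 2 - 1)
      ≤ ∑ n ∈ (Finset.range (s.sup id + 1)).image (fun i => N + 2 * i),
          Real.log n / ((n : ℝ) ^ 2 - 1) := by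
        apply Finset.sum_le_sum_of_subset_of_nonneg hsub
        intro n hn _
        obtain ⟨i, _, rfl⟩ := Finset.mem_image.1 hn
        have : (1 : ℝ) ≤ ((N + 2 * i : ℕ) : ℝ) := by exact_mod_cast (by omega : 1 ≤ N + 2 * i)
        exact div_nonneg (Real.log_nonneg this) (by nlinarith)
    _ = ∑ i ∈ Finset.range (s.sup id + 1),
          Real.log ((N + 2 * i : ℕ) : ℝ) / (((N + 2 * i : ℕ) : ℝ) ^ 2 - 1) := by
        rw [Finset.sum_image]
        intro a _ b _ h
        simpa using h
    _ ≤ ∑ i ∈ Finset.range (s.sup id + 1), (F i - F (i + 1)) := Finset.sum_le_sum fun i _ => step i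
    _ = F 0 - F (s.sup id + 1) := Finset.sum_range_sub' _ _
    _ ≤ F 0 := by
        have : 0 ≤ F (s.sup id + 1) := by
          simp only [hF]
          have h0 : (0 : ℝ) ≤ ((s.sup id + 1 : ℕ) : ℝ) := Nat.cast_nonneg _
          have hlog := Real.log_nonneg
            (show (1 : ℝ) ≤ (N : ℝ) + 2 * ((s.sup id + 1 : ℕ) : ℝ) by linarith)
          exact div_nonneg (by linarith) (by linarith)
        linarith
    _ = _ := by simp [hF]

lemma log_two_div_three_add_le :
    Real.log 2 / 3 + (Real.log 3 + 1) / 4 ≤ 0.76 := by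
  have h2 := Real.log_two_lt_d9
  have h3 : Real.log 3 ≤ 8 / 5 * Real.log 2 := by
    have : Real.log ((3 : ℝ) ^ 5) ≤ Real.log ((2 : ℝ) ^ 8) :=
      Real.log_le_log (by norm_num) (by norm_num)
    rw [Real.log_pow, Real.log_pow] at this
    push_cast at this
    linarith
  norm_num at *
  linarith

/-- The whole sum `∑ log p / (p² - 1)` over primes is at most `0.76`. -/
lemma sum_primes_log_div_le (s : Finset ℕ) (hs : ∀ p ∈ s, p.Prime) :
    ∑ p ∈ s, Real.log p / ((p : ℝ) ^ 2 - 1) ≤ 0.76 := by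
  have h := sum_odd_log_div_le (s.filter (· ≠ 2)) 3 (by norm_num) (by decide) (by
    intro n hn
    rw [Finset.mem_filter] at hn
    have := hs n hn.1
    have h2 := this.two_le
    exact ⟨this.odd_of_ne_two hn.2, by omega⟩)
  have h2 : ∑ p ∈ s.filter (fun p => ¬ p ≠ 2), Real.log p / ((p : ℝ) ^ 2 - 1)
      ≤ Real.log 2 / 3 := by
    have hsub : s.filter (fun p => ¬ p ≠ 2) ⊆ {2} := by
      intro p hp
      simpa using (Finset.mem_filter.1 hp).2
    refine (Finset.sum_le_sum_of_subset_of_nonneg hsub ?_).trans ?_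
    · intro p hp _
      rw [Finset.mem_singleton] at hp
      subst hp
      norm_num
      positivity
    · norm_num
  rw [← Finset.sum_filter_add_sum_filter_not s (· ≠ 2)]
  have := log_two_div_three_add_le
  norm_num at h
  norm_num at *
  linarith

/-- Sum of `log (j q) / (j q)²` over `j ≥ 1`. -/
lemma sum_log_mul_div_sq_le (q : ℝ) (hq : 1 ≤ q) (R : ℕ) :
    ∑ j ∈ Finset.Icc 1 R, Real.log (j * q) / (j * q) ^ 2
      ≤ (5 / 3 * Real.log q + 1.13) / q ^ 2 := by
  set L := Real.log q with hL
  have hL0 : 0 ≤ L := Real.log_nonneg hq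
  set F : ℕ → ℝ := fun j => (Real.log j + L + 1) / (j - 1 / 2) with hF
  have step : ∀ j : ℕ, 1 ≤ j → Real.log (j * q) / (j : ℝ) ^ 2 ≤ F j - F (j + 1) := by
    intro j hj
    have hj' : (1 : ℝ) ≤ j := by exact_mod_cast hj
    simp only [hF]
    push_cast
    rw [Real.log_mul (by linarith) (by linarith), ← hL]
    have hl := log_add_div_le_log_add (show (0 : ℝ) < j by linarith) (show (0 : ℝ) ≤ 1 by norm_num)
    have hlj := Real.log_nonneg hj'
    have h1 : (0 : ℝ) < j - 1 / 2 := by linarith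
    have h2 : (0 : ℝ) < (j : ℝ) + 1 - 1 / 2 := by linarith
    rw [div_sub_div _ _ h1.ne' h2.ne']
    have h4 : (Real.log (j + 1) - Real.log j) * (j - 1 / 2) ≤ 1 := by
      calc (Real.log (j + 1) - Real.log j) * (j - 1 / 2) ≤ 1 / j * (j - 1 / 2) := by gcongr
        _ ≤ 1 := by
          rw [div_mul_eq_mul_div, div_le_iff₀ (by linarith)]
          linarith
    rw [div_le_div_iff₀ (by positivity) (by positivity)]
    have h5 : Real.log j + L ≤ (Real.log j + L + 1) * (j + 1 - 1 / 2)
        - (j - 1 / 2) * (Real.log (j + 1) + L + 1) := by nlinarith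
    have h6 : ((j : ℝ) - 1 / 2) * (j + 1 - 1 / 2) ≤ (j : ℝ) ^ 2 := by nlinarith
    calc (Real.log j + L) * (((j : ℝ) - 1 / 2) * (j + 1 - 1 / 2))
        ≤ (Real.log j + L) * (j : ℝ) ^ 2 := by gcongr
      _ ≤ _ := by gcongr
  have hF0 : ∀ j : ℕ, 1 ≤ j → 0 ≤ F j := by
    intro j hj
    have hj' : (1 : ℝ) ≤ j := by exact_mod_cast hj
    exact div_nonneg (by linarith [Real.log_nonneg hj']) (by linarith)
  have main : ∀ R : ℕ, 1 ≤ R →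
      ∑ j ∈ Finset.Icc 1 R, Real.log (j * q) / (j : ℝ) ^ 2 ≤ L + F 2 - F (R + 1) := by
    intro R hR
    induction R, hR using Nat.le_induction with
    | base => simp [hL]
    | succ k hk ih =>
      rw [Finset.sum_Icc_succ_top (by omega)]
      have := step (k + 1) (by omega)
      linarith
  have e : ∑ j ∈ Finset.Icc 1 R, Real.log (j * q) / (j * q) ^ 2
      = (∑ j ∈ Finset.Icc 1 R, Real.log (j * q) / (j : ℝ) ^ 2) / q ^ 2 := by
    rw [Finset.sum_div]
    refine Finset.sum_congr rfl fun j _ => ?_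
    rw [mul_pow, div_div]
  rw [e]
  gcongr
  rcases Nat.eq_zero_or_pos R with rfl | hR
  · norm_num
    positivity
  · have h1 := main R hR
    have h2 := hF0 (R + 1) (by omega)
    have h3 : F 2 = 2 / 3 * (Real.log 2 + L + 1) := by simp only [hF]; push_cast; ring
    have := Real.log_two_lt_d9
    norm_num at *
    linarith


lemma log_factorial_le {n : ℕ} (hn : 1 ≤ n) :
    Real.log n.factorial ≤ (n + 1) * Real.log n - n + 1 := by
  induction n, hn using Nat.le_induction with
  | base => simp
  | succ k hk ih =>
    have hk' : (1 : ℝ) ≤ k := by exact_mod_cast hk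
    rw [Nat.factorial_succ]
    push_cast
    rw [Real.log_mul (by positivity) (by positivity)]
    have h := Real.one_sub_inv_le_log_of_pos (show (0 : ℝ) < (k + 1) / k by positivity)
    rw [Real.log_div (by positivity) (by positivity)] at h
    have e : 1 - (((k : ℝ) + 1) / k)⁻¹ = 1 / (k + 1) := by
      field_simp
      ring
    rw [e, div_le_iff₀ (by positivity)] at h
    nlinarith

lemma sum_log_primesLE_mul_div_le (n : ℕ) :
    ∑ p ∈ n.primesLE, ((n / p : ℕ) : ℝ) * Real.log p ≤ Real.log n.factorial := by
  have e : ∑ p ∈ n.primesLE, ((n / p : ℕ) : ℝ) * Real.log p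
      = ∑ k ∈ Finset.Ioc 0 n, ∑ p ∈ k.primeFactors, Real.log p := by
    calc ∑ p ∈ n.primesLE, ((n / p : ℕ) : ℝ) * Real.log p
        = ∑ p ∈ n.primesLE, ∑ k ∈ Finset.Ioc 0 n with p ∣ k, Real.log p := by
          refine Finset.sum_congr rfl fun p _ => ?_
          rw [Finset.sum_const, Nat.Ioc_filter_dvd_card_eq_div, nsmul_eq_mul]
      _ = _ := by
          refine Finset.sum_comm' fun p k => ?_
          simp only [Nat.mem_primesLE, Finset.mem_filter, Finset.mem_Ioc, Nat.mem_primeFactors]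
          constructor
          · rintro ⟨⟨h1, h2⟩, ⟨h3, h4⟩, h5⟩
            exact ⟨⟨h2, h5, by omega⟩, h3, h4⟩
          · rintro ⟨⟨h1, h2, h3⟩, h4, h5⟩
            exact ⟨⟨(Nat.le_of_dvd h4 h2).trans h5, h1⟩, ⟨h4, h5⟩, h2⟩
  have hI : Finset.Ico 1 (n + 1) = Finset.Ioc 0 n := by
    ext
    simp only [Finset.mem_Ico, Finset.mem_Ioc]
    omega
  rw [e, ← Finset.prod_Ico_id_eq_factorial, hI, Nat.cast_prod, Real.log_prod]
  · refine Finset.sum_le_sum fun k hk => ?_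
    have hk0 := (Finset.mem_Ioc.1 hk).1
    rw [← Real.log_prod, ← Nat.cast_prod]
    · apply Real.log_le_log
      · exact_mod_cast Finset.prod_pos fun p hp => (Nat.prime_of_mem_primeFactors hp).pos
      · exact_mod_cast Nat.le_of_dvd hk0 (Nat.prod_primeFactors_dvd k)
    · intro p hp
      exact_mod_cast (Nat.prime_of_mem_primeFactors hp).ne_zero
  · intro k hk
    have hk0 := (Finset.mem_Ioc.1 hk).1
    exact_mod_cast hk0.ne'

/-- An explicit upper bound in Mertens' first theorem. -/
lemma sum_log_primesLE_div_le {n : ℕ} (hn : 1 ≤ n) :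
    ∑ p ∈ n.primesLE, Real.log p / p
      ≤ Real.log n + (Real.log n + 1) / n + Real.log 4 - 1 := by
  have hn' : (1 : ℝ) ≤ n := by exact_mod_cast hn
  have h1 := sum_log_primesLE_mul_div_le n
  have h2 := log_factorial_le hn
  have h3 : ∑ p ∈ n.primesLE, Real.log p ≤ Real.log 4 * n := by
    rw [← Chebyshev.theta_eq_sum_primesLE_log]
    exact Chebyshev.theta_le_log4_mul_x (by positivity)
  have h4 : n * ∑ p ∈ n.primesLE, Real.log p / p
      ≤ ∑ p ∈ n.primesLE, ((n / p : ℕ) : ℝ) * Real.log p + ∑ p ∈ n.primesLE, Real.log p := by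
    rw [Finset.mul_sum, ← Finset.sum_add_distrib]
    refine Finset.sum_le_sum fun p hp => ?_
    have hp' : (0 : ℝ) < p := by exact_mod_cast (Nat.mem_primesLE.1 hp).2.pos
    have h5 : (n : ℝ) / p ≤ ((n / p : ℕ) : ℝ) + 1 := by
      have := Nat.lt_floor_add_one ((n : ℝ) / p)
      rw [Nat.floor_div_eq_div] at this
      exact this.le
    calc (n : ℝ) * (Real.log p / p) = n / p * Real.log p := by ring
      _ ≤ (((n / p : ℕ) : ℝ) + 1) * Real.log p := by
        gcongr
      _ = _ := by ring
  have h6 : n * ∑ p ∈ n.primesLE, Real.log p / p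
      ≤ n * (Real.log n + (Real.log n + 1) / n + Real.log 4 - 1) := by
    have : (n : ℝ) * (Real.log n + (Real.log n + 1) / n + Real.log 4 - 1)
        = (n + 1) * Real.log n - n + 1 + Real.log 4 * n := by
      field_simp
      ring
    linarith
  exact le_of_mul_le_mul_left h6 (by linarith)

section Order

variable {q m p : ℕ}

lemma gp_dvd [Fact q.Prime] {h : ℕ} (hmh : m * h = q - 1) (hp : ¬ q ∣ p) : gp q m p ∣ h := by
  apply orderOf_dvd_of_pow_eq_one
  rw [← pow_mul, hmh]
  apply ZMod.pow_card_sub_one_eq_one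
  rwa [Ne, ZMod.natCast_eq_zero_iff]

lemma cast_pow_eq_neg_one [Fact q.Prime] {k : ℕ} (hk : 0 < k) (hg : gp q m p = 2 * k) :
    (p : ZMod q) ^ (m * k) = -1 := by
  rw [pow_mul]
  have h1 : (((p : ZMod q) ^ m) ^ k) ^ 2 = 1 := by
    rw [← pow_mul, mul_comm, ← hg]
    exact pow_orderOf_eq_one _
  have h2 : ((p : ZMod q) ^ m) ^ k ≠ 1 := by
    intro h
    have := Nat.le_of_dvd hk (orderOf_dvd_of_pow_eq_one h)
    rw [gp] at hg
    omega
  exact (sq_eq_one_iff.1 h1).resolve_left h2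

lemma le_pow_add_one_of_gp_eq [Fact q.Prime] {k : ℕ} (hk : 0 < k) (hg : gp q m p = 2 * k) :
    q ≤ p ^ (m * k) + 1 := by
  apply Nat.le_of_dvd (by omega)
  rw [← ZMod.natCast_eq_zero_iff]
  push_cast
  rw [cast_pow_eq_neg_one hk hg]
  ring

lemma mul_pow_le_pow_of_gp_eq [Fact q.Prime] {l k : ℕ} (hl : Odd l) (hl1 : 1 < l) (hk : 0 < k)
    (hg : gp q m p = 2 * (l * k)) : q * p ^ (m * k) ≤ p ^ (m * (l * k)) := by
  have hq := (Fact.out : q.Prime)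
  have e : p ^ (m * (l * k)) = (p ^ (m * k)) ^ l := by
    rw [← pow_mul]
    ring_nf
  have h1 : q ∣ (p ^ (m * k)) ^ l + 1 := by
    rw [← e, ← ZMod.natCast_eq_zero_iff]
    push_cast
    rw [cast_pow_eq_neg_one (by positivity) hg]
    ring
  obtain ⟨B, hB⟩ : p ^ (m * k) + 1 ∣ (p ^ (m * k)) ^ l + 1 := by
    simpa using hl.nat_add_dvd_pow_add_pow (p ^ (m * k)) 1
  have h2 : ¬ q ∣ p ^ (m * k) + 1 := by
    rw [← ZMod.natCast_eq_zero_iff]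
    push_cast
    intro h
    have h3 : ((p : ZMod q) ^ m) ^ (2 * k) = 1 := by
      rw [← pow_mul, show m * (2 * k) = (m * k) * 2 by ring, pow_mul,
        eq_neg_of_add_eq_zero_left h]
      ring
    have := Nat.le_of_dvd (by omega) (orderOf_dvd_of_pow_eq_one h3)
    rw [gp] at hg
    nlinarith
  have h3 : q ∣ B := by
    rw [hB] at h1
    exact (hq.dvd_mul.1 h1).resolve_left h2
  have h4 : q ≤ B := by
    apply Nat.le_of_dvd _ h3
    by_contra h0
    have : B = 0 := by omega
    rw [this] at hB
    omega
  rw [e]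
  have h5 : (p ^ (m * k) + 1) * q ≤ (p ^ (m * k)) ^ l + 1 := by
    rw [hB]
    exact Nat.mul_le_mul_left _ h4
  have := hq.one_le
  nlinarith

lemma card_filter_orderOf_le [Fact q.Prime] {g : ℕ} (hg : 0 < g) :
    (Finset.univ.filter fun a : ZMod q => orderOf a = g).card ≤ g.totient := by
  rcases (Finset.univ.filter fun a : ZMod q => orderOf a = g).eq_empty_or_nonempty with h | ⟨a, ha⟩
  · simp [h]
  · have ha' : IsPrimitiveRoot a g := by
      rw [← (Finset.mem_filter.1 ha).2]
      exact IsPrimitiveRoot.orderOf a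
    rw [← ha'.card_primitiveRoots]
    apply Finset.card_le_card
    intro b hb
    rw [mem_primitiveRoots hg, ← (Finset.mem_filter.1 hb).2]
    exact IsPrimitiveRoot.orderOf b

lemma card_le_mul_totient [Fact q.Prime] {g : ℕ} (hm : 0 < m) (hg : 0 < g) (t : Finset ℕ)
    (ht : ∀ p ∈ t, gp q m p = g) (hinj : Set.InjOn (fun p : ℕ => (p : ZMod q)) t) :
    t.card ≤ m * g.totient := by
  classical
  rw [← Finset.card_image_of_injOn hinj]
  have hsub : t.image (fun p : ℕ => (p : ZMod q)) ⊆
      (Finset.univ.filter fun a : ZMod q => orderOf a = g).biUnion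
        (fun a => Polynomial.nthRootsFinset m a) := by
    intro x hx
    obtain ⟨p, hp, rfl⟩ := Finset.mem_image.1 hx
    rw [Finset.mem_biUnion]
    refine ⟨(p : ZMod q) ^ m, ?_, ?_⟩
    · simpa [gp] using ht p hp
    · rw [Polynomial.mem_nthRootsFinset hm]
  refine (Finset.card_le_card hsub).trans ?_
  refine (Finset.card_biUnion_le_card_mul _ _ m ?_).trans ?_
  · intro a _
    rw [Polynomial.nthRootsFinset_def]
    exact (Multiset.toFinset_card_le _).trans (Polynomial.card_nthRoots m a)
  · rw [mul_comm]
    exact Nat.mul_le_mul_left _ (card_filter_orderOf_le hg)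

lemma injOn_cast_of_div_eq (j : ℕ) (t : Finset ℕ) (ht : ∀ p ∈ t, p / q = j) :
    Set.InjOn (fun p : ℕ => (p : ZMod q)) t := by
  intro a ha b hb hab
  have h1 : a % q = b % q := (ZMod.natCast_eq_natCast_iff' a b q).1 hab
  have h2 := ht a ha
  have h3 := ht b hb
  rw [← Nat.div_add_mod a q, ← Nat.div_add_mod b q, h1, h2, h3]

lemma gp_sub [Fact q.Prime] {g : ℕ} (hp : p ≤ q) (h4 : 4 ∣ g) (hg0 : 0 < g) (hg : gp q m p = g) :
    gp q m (q - p) = g := by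
  obtain ⟨c, rfl⟩ := h4
  have e : ((q - p : ℕ) : ZMod q) = -(p : ZMod q) := by
    rw [Nat.cast_sub hp]
    simp
  unfold gp
  rw [e]
  rcases Nat.even_or_odd m with hm | hm
  · rwa [hm.neg_pow]
  · have h1 : (p : ZMod q) ^ (m * (2 * c)) = -1 :=
      cast_pow_eq_neg_one (by omega) (by rw [hg]; ring)
    have h2 : -((p : ZMod q) ^ m) = ((p : ZMod q) ^ m) ^ (2 * c + 1) := by
      rw [pow_succ, ← pow_mul, h1]
      ring
    rw [hm.neg_pow, h2, Nat.Coprime.orderOf_pow]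
    · exact hg
    · unfold gp at hg
      rw [hg]
      apply Nat.Coprime.mul_left
      · rw [show 4 = 2 ^ 2 by norm_num]
        apply Nat.Coprime.pow_left
        rw [Nat.coprime_two_left]
        exact ⟨c, rfl⟩
      · simp

/-- Half of the residues `x` for which `x ^ m` has order `g`, `4 ∣ g`, have an odd
representative. -/
lemma two_mul_card_le [Fact q.Prime] {g : ℕ} (hq2 : q ≠ 2) (hm : 0 < m) (h4 : 4 ∣ g) (hg0 : 0 < g)
    (t : Finset ℕ) (ht : ∀ p ∈ t, p.Prime ∧ p < q ∧ p ≠ q - 2 ∧ gp q m p = g) :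
    2 * t.card ≤ m * g.totient := by
  have hq := (Fact.out : q.Prime)
  have hqodd := hq.odd_of_ne_two hq2
  have hq3 : 3 ≤ q := by have := hq.two_le; omega
  set r : ℕ → ℕ := fun p => if p = 2 then q - 2 else p with hr
  have hrinj : Set.InjOn r t := by
    intro a ha b hb hab
    have h1 := (ht a ha).2.2.1
    have h2 := (ht b hb).2.2.1
    simp only [hr] at hab
    split_ifs at hab <;> omega
  have hrt : ∀ x ∈ t.image r, Odd x ∧ x < q ∧ gp q m x = g := by
    intro x hx
    obtain ⟨p, hp, rfl⟩ := Finset.mem_image.1 hx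
    obtain ⟨h1, h2, h3, h5⟩ := ht p hp
    simp only [hr]
    split_ifs with h
    · subst h
      refine ⟨?_, by omega, gp_sub (by omega) h4 hg0 h5⟩
      obtain ⟨a, ha⟩ := hqodd
      exact ⟨a - 1, by omega⟩
    · exact ⟨h1.odd_of_ne_two h, h2, h5⟩
  have hdisj : Disjoint (t.image r) ((t.image r).image fun x => q - x) := by
    rw [Finset.disjoint_left]
    intro x hx hx'
    obtain ⟨z, hz, rfl⟩ := Finset.mem_image.1 hx'
    obtain ⟨a, ha⟩ := (hrt _ hx).1
    obtain ⟨b, hb⟩ := (hrt z hz).1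
    obtain ⟨c, hc⟩ := hqodd
    have := (hrt z hz).2.1
    omega
  have hcard : (t.image r ∪ (t.image r).image fun x => q - x).card = 2 * t.card := by
    rw [Finset.card_union_of_disjoint hdisj, Finset.card_image_of_injOn (s := t.image r),
      Finset.card_image_of_injOn hrinj]
    · ring
    · intro a ha b hb hab
      have h1 := (hrt a ha).2.1
      have h2 := (hrt b hb).2.1
      simp only at hab
      omega
  rw [← hcard]
  refine card_le_mul_totient (q := q) hm hg0 _ ?_ ?_
  · intro x hx
    rcases Finset.mem_union.1 hx with h | h
    · exact (hrt x h).2.2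
    · obtain ⟨z, hz, rfl⟩ := Finset.mem_image.1 h
      exact gp_sub (hrt z hz).2.1.le h4 hg0 (hrt z hz).2.2
  · apply injOn_cast_of_div_eq 0
    intro x hx
    apply Nat.div_eq_of_lt
    rcases Finset.mem_union.1 hx with h | h
    · exact (hrt x h).2.1
    · obtain ⟨z, hz, rfl⟩ := Finset.mem_image.1 h
      have := (hrt z hz).1.pos
      omega

end Order

/-- The positive part of `Sterm`, supported on the primes for which `gp` is even. -/
noncomputable def evenTerm (q m p : ℕ) : ℝ :=
  if gp q m p = 2 then Real.log p / ((p : ℝ) ^ 2 - 1)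
  else if 4 ≤ gp q m p ∧ 2 ∣ gp q m p then
    Real.log p / ((p : ℝ) ^ (gp q m p / 2) - ((p : ℝ) ^ (gp q m p / 2))⁻¹)
  else 0

lemma succ_mul_div_pow_sub_one_le {x a : ℝ} (hx : 2 ≤ x) (ha : 0 ≤ a) {n : ℕ} (hn : 1 ≤ n) :
    ((n : ℝ) + 1) * a / (x ^ (n + 1) - 1) ≤ (n : ℝ) * a / (x ^ n - 1) := by
  have h1 : 1 < x ^ n := one_lt_pow₀ (by linarith) (by omega)
  have h2 : 1 < x ^ (n + 1) := one_lt_pow₀ (by linarith) (by omega)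
  have hn' : (1 : ℝ) ≤ n := by exact_mod_cast hn
  rw [div_le_div_iff₀ (by linarith) (by linarith)]
  have h3 : ((n : ℝ) + 1) * (x ^ n - 1) ≤ n * (x ^ (n + 1) - 1) := by
    rw [pow_succ]
    have : 2 * (n * x ^ n) ≤ x * (n * x ^ n) := by gcongr
    nlinarith
  nlinarith

lemma Sterm_le_evenTerm {q m p : ℕ} (hq : 2 ≤ q) (hp : p.Prime) :
    Sterm q m p ≤ evenTerm q m p := by
  have hp2 : (2 : ℝ) ≤ p := by exact_mod_cast hp.two_le
  have hl : 0 ≤ Real.log p := Real.log_nonneg (by linarith)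
  have key : ∀ n : ℕ, 2 ≤ n → (n : ℝ) * Real.log p / ((p : ℝ) ^ n - 1)
      - ((n : ℝ) - 1) * Real.log p / ((p : ℝ) ^ (n - 1) - 1) ≤ 0 := by
    intro n hn
    obtain ⟨k, rfl⟩ : ∃ k, n = k + 1 := ⟨n - 1, by omega⟩
    have := succ_mul_div_pow_sub_one_le hp2 hl (show 1 ≤ k by omega)
    push_cast
    simp only [add_sub_cancel_right]
    linarith
  have hterm : ∀ k : ℕ, 0 ≤ Real.log p / ((p : ℝ) ^ k - ((p : ℝ) ^ k)⁻¹) := by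
    intro k
    have h1 : 1 ≤ (p : ℝ) ^ k := one_le_pow₀ (by linarith)
    have := inv_le_one_of_one_le₀ h1
    exact div_nonneg hl (by linarith)
  have hsq : 0 ≤ Real.log p / ((p : ℝ) ^ 2 - 1) := div_nonneg hl (by nlinarith)
  unfold Sterm evenTerm
  have k1 := key q hq
  have k2 := key (gp q m p)
  have k3 := hterm (gp q m p / 2)
  split_ifs <;> first | omega | linarith | linarith [k2 (by omega)]

lemma evenTerm_of_eq {q m p k : ℕ} (hk : 2 ≤ k) (hg : gp q m p = 2 * k) :
    evenTerm q m p = Real.log p / ((p : ℝ) ^ k - ((p : ℝ) ^ k)⁻¹) := by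
  unfold evenTerm
  rw [if_neg (by omega), if_pos (by omega), hg, Nat.mul_div_cancel_left _ (by norm_num)]

lemma log_div_pow_sub_inv_le {p : ℝ} (hp : 2 ≤ p) {k : ℕ} (hk : 1 ≤ k) :
    Real.log p / (p ^ k - (p ^ k)⁻¹) ≤ Real.log p / (p ^ k - 1) := by
  have h1 : 1 < p ^ k := one_lt_pow₀ (by linarith) (by omega)
  have := inv_le_one_of_one_le₀ h1.le
  exact div_le_div_of_nonneg_left (Real.log_nonneg (by linarith)) (by linarith) (by linarith)

lemma evenTerm_le {q m p : ℕ} (hp : p.Prime) :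
    evenTerm q m p ≤ Real.log p / ((p : ℝ) ^ 2 - 1) := by
  have hp2 : (2 : ℝ) ≤ p := by exact_mod_cast hp.two_le
  have hl : 0 ≤ Real.log p := Real.log_nonneg (by linarith)
  have h0 : (0 : ℝ) < (p : ℝ) ^ 2 - 1 := by nlinarith
  by_cases h : 4 ≤ gp q m p ∧ 2 ∣ gp q m p
  · obtain ⟨h4, k, hk⟩ := h
    rw [evenTerm_of_eq (by omega) hk]
    refine (log_div_pow_sub_inv_le hp2 (by omega)).trans ?_
    have : (p : ℝ) ^ 2 ≤ (p : ℝ) ^ k := pow_le_pow_right₀ (by linarith) (by omega)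
    exact div_le_div_of_nonneg_left hl h0 (by linarith)
  · unfold evenTerm
    rw [if_neg h]
    split_ifs
    · exact le_rfl
    · positivity

lemma mul_log_eq {q m : ℕ} {y : ℝ} (hym : y ^ m = (q : ℝ) - 1) :
    m * Real.log y = Real.log (q - 1) := by
  rw [← hym, Real.log_pow]

lemma log_pred_le {q : ℝ} (hq : 2 ≤ q) : Real.log (q - 1) ≤ Real.log q :=
  Real.log_le_log (by linarith) (by linarith)

lemma sum_evenTerm_le_gp_le {q m : ℕ} {β : ℝ} (hβ : 2 ≤ β) (s : Finset ℕ)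
    (hs : ∀ p ∈ s, p.Prime ∧ 4 ≤ gp q m p ∧ 2 ∣ gp q m p ∧ 2 * β ≤ gp q m p) :
    ∑ p ∈ s, evenTerm q m p ≤ 3.04 / ((2 : ℝ) ^ β - 1) := by
  have h2β : (4 : ℝ) ≤ (2 : ℝ) ^ β := by
    calc (4 : ℝ) = (2 : ℝ) ^ (2 : ℝ) := by norm_num
      _ ≤ _ := Real.rpow_le_rpow_of_exponent_le (by norm_num) hβ
  calc ∑ p ∈ s, evenTerm q m p
      ≤ ∑ p ∈ s, 4 / ((2 : ℝ) ^ β - 1) * (Real.log p / ((p : ℝ) ^ 2 - 1)) := by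
        refine Finset.sum_le_sum fun p hp => ?_
        obtain ⟨h1, h2, ⟨k, hk⟩, h4⟩ := hs p hp
        have hp2 : (2 : ℝ) ≤ p := by exact_mod_cast h1.two_le
        have hl : 0 ≤ Real.log p := Real.log_nonneg (by linarith)
        rw [evenTerm_of_eq (by omega) hk]
        refine (log_div_pow_sub_inv_le hp2 (by omega)).trans ?_
        have hkβ : β ≤ k := by
          rw [hk] at h4
          push_cast at h4
          linarith
        have h5 : (p : ℝ) ^ β ≤ (p : ℝ) ^ k := by
          rw [← Real.rpow_natCast]
          exact Real.rpow_le_rpow_of_exponent_le (by linarith) hkβ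
        have h6 : (p : ℝ) ^ β = (2 : ℝ) ^ β * ((p : ℝ) / 2) ^ β := by
          rw [← Real.mul_rpow (by norm_num) (by positivity)]
          congr 1
          ring
        have h7 : ((p : ℝ) / 2) ^ 2 ≤ ((p : ℝ) / 2) ^ β := by
          rw [← Real.rpow_natCast]
          exact Real.rpow_le_rpow_of_exponent_le (by linarith) (by simpa using hβ)
        have h8 : 1 ≤ ((p : ℝ) / 2) ^ 2 := one_le_pow₀ (by linarith)
        have h9 : ((2 : ℝ) ^ β - 1) * ((p : ℝ) / 2) ^ 2 ≤ (p : ℝ) ^ k - 1 := by nlinarith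
        have h10 : (0 : ℝ) < (p : ℝ) ^ 2 - 1 := by nlinarith
        have h11 : (0 : ℝ) < (2 : ℝ) ^ β - 1 := by linarith
        calc Real.log p / ((p : ℝ) ^ k - 1)
            ≤ Real.log p / (((2 : ℝ) ^ β - 1) * (((p : ℝ) ^ 2 - 1) / 4)) := by
              apply div_le_div_of_nonneg_left hl (by positivity)
              refine le_trans ?_ h9
              gcongr
              nlinarith
          _ = _ := by
              field_simp
    _ = 4 / ((2 : ℝ) ^ β - 1) * ∑ p ∈ s, Real.log p / ((p : ℝ) ^ 2 - 1) := by
        rw [Finset.mul_sum]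
    _ ≤ 4 / ((2 : ℝ) ^ β - 1) * 0.76 := by
        have := sum_primes_log_div_le s fun p hp => (hs p hp).1
        have : (0 : ℝ) < (2 : ℝ) ^ β - 1 := by linarith
        gcongr
    _ = _ := by ring

lemma sum_evenTerm_sub_two_le {q m : ℕ} (hq5 : 5 ≤ q) (s : Finset ℕ)
    (hs : ∀ p ∈ s, p.Prime ∧ p = q - 2) :
    ∑ p ∈ s, evenTerm q m p ≤ Real.log q / (((q : ℝ) - 2) ^ 2 - 1) := by
  have hq5' : (5 : ℝ) ≤ q := by exact_mod_cast hq5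
  have h0 : (0 : ℝ) < ((q : ℝ) - 2) ^ 2 - 1 := by nlinarith
  have hlq : 0 ≤ Real.log q := Real.log_nonneg (by linarith)
  have hcard : s.card ≤ 1 := Finset.card_le_one.2 fun a ha b hb =>
    (hs a ha).2.trans (hs b hb).2.symm
  calc ∑ p ∈ s, evenTerm q m p ≤ ∑ p ∈ s, Real.log q / (((q : ℝ) - 2) ^ 2 - 1) := by
        refine Finset.sum_le_sum fun p hp => ?_
        obtain ⟨h1, h2⟩ := hs p hp
        refine (evenTerm_le h1).trans ?_
        have e : (p : ℝ) = (q : ℝ) - 2 := by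
          rw [h2, Nat.cast_sub (by omega)]
          norm_num
        rw [e]
        gcongr
        · linarith
        · linarith
    _ = s.card * (Real.log q / (((q : ℝ) - 2) ^ 2 - 1)) := by rw [Finset.sum_const, nsmul_eq_mul]
    _ ≤ 1 * (Real.log q / (((q : ℝ) - 2) ^ 2 - 1)) := by
        have : (s.card : ℝ) ≤ 1 := by exact_mod_cast hcard
        gcongr
    _ = _ := one_mul _

lemma log_div_sq_sub_one_le_log_div_sq {x X : ℝ} (hX : 2 ≤ X) (hx : X + 1 ≤ x) :
    Real.log x / (x ^ 2 - 1) ≤ Real.log X / X ^ 2 := by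
  refine (log_div_sq_sub_one_le (show 1 < X + 1 by linarith) hx).trans ?_
  have h1 := log_add_div_le_log_add (show 0 < X by linarith) zero_le_one
  have h2 : 1 / 2 ≤ Real.log X := by
    have := Real.log_two_gt_d9
    have := Real.log_le_log (by norm_num) hX
    linarith
  rw [div_le_div_iff₀ (by nlinarith) (by positivity)]
  have h3 : (Real.log (X + 1) - Real.log X) * X ≤ 1 := by
    rwa [← le_div_iff₀ (by linarith)]
  have h4 : Real.log (X + 1) * X ^ 2 ≤ Real.log X * X ^ 2 + X := by nlinarith
  nlinarith

section Classes

variable {q m : ℕ} [Fact q.Prime]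

lemma le_prime_pow {y : ℝ} (hm : 0 < m) (hym : y ^ m = (q : ℝ) - 1) {p k : ℕ}
    (hk : 0 < k) (hg : gp q m p = 2 * k) : y ≤ (p : ℝ) ^ k := by
  have h1 := le_pow_add_one_of_gp_eq hk hg
  have h2 : (q : ℝ) ≤ (p : ℝ) ^ (m * k) + 1 := by exact_mod_cast h1
  apply le_of_pow_le_pow_left₀ hm.ne' (by positivity)
  rw [hym, ← pow_mul, mul_comm k m]
  linarith

lemma sum_evenTerm_gp_two_le {y : ℝ} (hm : 0 < m) (hy : 1 < y) (hym : y ^ m = (q : ℝ) - 1)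
    (s : Finset ℕ) (hs : ∀ p ∈ s, p.Prime ∧ p < q ∧ gp q m p = 2) :
    ∑ p ∈ s, evenTerm q m p ≤ Real.log q / (y ^ 2 - 1) := by
  have hq2 : (2 : ℝ) ≤ q := by exact_mod_cast (Fact.out : q.Prime).two_le
  have hy0 : 0 < y ^ 2 - 1 := by nlinarith
  have hcard : s.card ≤ m := by
    have := card_le_mul_totient hm (by norm_num) s (fun p hp => (hs p hp).2.2)
      (injOn_cast_of_div_eq 0 s fun p hp => Nat.div_eq_of_lt (hs p hp).2.1)
    simpa using this
  have hl : 0 ≤ Real.log y := Real.log_nonneg hy.le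
  calc ∑ p ∈ s, evenTerm q m p ≤ ∑ p ∈ s, Real.log y / (y ^ 2 - 1) := by
        refine Finset.sum_le_sum fun p hp => ?_
        obtain ⟨h1, h2, h3⟩ := hs p hp
        have h4 := le_prime_pow hm hym one_pos (by simpa using h3)
        rw [pow_one] at h4
        exact (evenTerm_le h1).trans (log_div_sq_sub_one_le hy h4)
    _ = s.card * (Real.log y / (y ^ 2 - 1)) := by rw [Finset.sum_const, nsmul_eq_mul]
    _ ≤ m * (Real.log y / (y ^ 2 - 1)) := by
        have : (s.card : ℝ) ≤ m := by exact_mod_cast hcard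
        gcongr
    _ = Real.log (q - 1) / (y ^ 2 - 1) := by rw [← mul_log_eq hym]; ring
    _ ≤ _ := by
        have := log_pred_le hq2
        gcongr

lemma not_gp_one_eq_two (hq2 : q ≠ 2) (hq3 : q ≠ 3) {p : ℕ} (hp : p.Prime) (hpq : p < q) :
    gp q 1 p ≠ 2 := by
  intro h
  have hq := (Fact.out : q.Prime)
  have h1 := le_pow_add_one_of_gp_eq (q := q) (m := 1) one_pos (by simpa using h)
  simp only [mul_one, pow_one] at h1
  obtain ⟨a, ha⟩ := hq.odd_of_ne_two hq2
  rcases hp.eq_two_or_odd' with h2 | ⟨b, hb⟩ <;> omega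

lemma sum_evenTerm_gp_two_pow_le {y : ℝ} (hq2 : q ≠ 2) (hm : 0 < m) (hy : 1 < y)
    (hym : y ^ m = (q : ℝ) - 1) {j : ℕ} (hj : 2 ≤ j) (s : Finset ℕ)
    (hs : ∀ p ∈ s, p.Prime ∧ p < q ∧ p ≠ q - 2 ∧ gp q m p = 2 ^ j) :
    ∑ p ∈ s, evenTerm q m p ≤ Real.log q / 2 * (y / (y ^ 2 - 1)) := by
  obtain ⟨i, rfl⟩ : ∃ i, j = i + 1 := ⟨j - 1, by omega⟩
  have hq2' : (2 : ℝ) ≤ q := by exact_mod_cast (Fact.out : q.Prime).two_le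
  have hy0 : 0 < y ^ 2 - 1 := by nlinarith
  have hl : 0 ≤ Real.log y := Real.log_nonneg hy.le
  have hyy : y - y⁻¹ = (y ^ 2 - 1) / y := by field_simp
  have hyy0 : 0 < y - y⁻¹ := by rw [hyy]; positivity
  have hk2 : 2 ≤ 2 ^ i := by
    calc 2 = 2 ^ 1 := rfl
      _ ≤ 2 ^ i := Nat.pow_le_pow_right (by norm_num) (by omega)
  have hk0 : (0 : ℝ) < (2 : ℝ) ^ i := by positivity
  have h4 : 4 ∣ 2 ^ (i + 1) := by
    rw [show 4 = 2 ^ 2 by norm_num]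
    exact pow_dvd_pow 2 (by omega)
  have hcard : 2 * s.card ≤ m * 2 ^ i := by
    have := two_mul_card_le hq2 hm h4 (by positivity) s hs
    rwa [Nat.totient_prime_pow Nat.prime_two (by omega), Nat.add_sub_cancel,
      show 2 - 1 = 1 from rfl, mul_one] at this
  calc ∑ p ∈ s, evenTerm q m p ≤ ∑ p ∈ s, Real.log y / (y - y⁻¹) / 2 ^ i := by
        refine Finset.sum_le_sum fun p hp => ?_
        obtain ⟨h1, h2, h3, h5⟩ := hs p hp
        have hg : gp q m p = 2 * 2 ^ i := by rw [h5]; ring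
        have h6 := le_prime_pow hm hym (by positivity) hg
        have h7 := antitoneOn_log_div_sub_inv (Set.mem_Ioi.2 hy)
          (Set.mem_Ioi.2 (hy.trans_le h6)) h6
        rw [evenTerm_of_eq hk2 hg, le_div_iff₀ hk0]
        refine le_trans (le_of_eq ?_) h7
        simp only [Real.log_pow]
        push_cast
        ring
    _ = s.card * (Real.log y / (y - y⁻¹) / 2 ^ i) := by rw [Finset.sum_const, nsmul_eq_mul]
    _ ≤ (m * 2 ^ i / 2) * (Real.log y / (y - y⁻¹) / 2 ^ i) := by
        have : (2 : ℝ) * s.card ≤ m * 2 ^ i := by exact_mod_cast hcard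
        gcongr
        linarith
    _ = Real.log (q - 1) / 2 * (y / (y ^ 2 - 1)) := by
        rw [← mul_log_eq hym, hyy]
        field_simp
    _ ≤ _ := by
        have := log_pred_le hq2'
        gcongr

lemma sum_evenTerm_two_pow_lt_le {y α : ℝ} (hq2 : q ≠ 2) (hm : 0 < m) (hy : 1 < y)
    (hym : y ^ m = (q : ℝ) - 1) {h : ℕ} (hh : 0 < h) (hν : 1 ≤ padicValNat 2 h) (hα : 1 ≤ α)
    (s : Finset ℕ) (hs : ∀ p ∈ s, p.Prime ∧ p < q ∧ p ≠ q - 2 ∧ gp q m p ∣ h ∧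
      ∃ j, 2 ≤ j ∧ gp q m p = 2 ^ j ∧ (gp q m p : ℝ) < α) :
    ∑ p ∈ s, evenTerm q m p ≤
      min (((padicValNat 2 h : ℝ) - 1) / 2) (Real.log α / Real.log 4)
        * (Real.log q * (y / (y ^ 2 - 1))) := by
  set J := s.image fun p => Nat.log 2 (gp q m p) with hJ
  have hy0 : 0 < y ^ 2 - 1 := by nlinarith
  have hq2' : (2 : ℝ) ≤ q := by exact_mod_cast (Fact.out : q.Prime).two_le
  have hlq : 0 ≤ Real.log q := Real.log_nonneg (by linarith)
  have hl2 : 0 < Real.log 2 := Real.log_pos (by norm_num)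
  have hl4 : Real.log 4 = 2 * Real.log 2 := by
    rw [show (4 : ℝ) = 2 ^ 2 by norm_num, Real.log_pow]
    norm_num
  have hJmem : ∀ j ∈ J, 2 ≤ j ∧ j ≤ padicValNat 2 h ∧ (2 : ℝ) ^ j < α := by
    intro j hj
    obtain ⟨p, hp, rfl⟩ := Finset.mem_image.1 hj
    obtain ⟨-, -, -, h4, i, hi, h5, h6⟩ := hs p hp
    have e : Nat.log 2 (gp q m p) = i := by rw [h5, Nat.log_pow (by norm_num)]
    rw [e]
    refine ⟨hi, ?_, ?_⟩
    · rw [h5] at h4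
      exact (padicValNat_dvd_iff_le hh.ne').1 h4
    · rw [h5] at h6
      exact_mod_cast h6
  have hsum : ∑ p ∈ s, evenTerm q m p ≤ J.card * (Real.log q / 2 * (y / (y ^ 2 - 1))) := by
    rw [← Finset.sum_fiberwise_of_maps_to (s := s) (t := J) (g := fun p => Nat.log 2 (gp q m p))
      (fun p hp => Finset.mem_image_of_mem _ hp), ← nsmul_eq_mul, ← Finset.sum_const]
    refine Finset.sum_le_sum fun j hj => ?_
    apply sum_evenTerm_gp_two_pow_le hq2 hm hy hym (hJmem j hj).1
    intro p hp
    obtain ⟨hp1, hp2⟩ := Finset.mem_filter.1 hp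
    obtain ⟨h1, h2, h3, h4, i, hi, h5, h6⟩ := hs p hp1
    refine ⟨h1, h2, h3, ?_⟩
    rw [h5, Nat.log_pow (by norm_num)] at hp2
    rw [h5, hp2]
  have hJ1 : (J.card : ℝ) / 2 ≤ ((padicValNat 2 h : ℝ) - 1) / 2 := by
    have h1 : J ⊆ Finset.Icc 2 (padicValNat 2 h) := fun j hj =>
      Finset.mem_Icc.2 ⟨(hJmem j hj).1, (hJmem j hj).2.1⟩
    have h2 := Finset.card_le_card h1
    rw [Nat.card_Icc] at h2
    have h3 : J.card + 1 ≤ padicValNat 2 h := by omega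
    have : (J.card : ℝ) + 1 ≤ padicValNat 2 h := by exact_mod_cast h3
    linarith
  have hJ2 : (J.card : ℝ) / 2 ≤ Real.log α / Real.log 4 := by
    have hJα : (J.card : ℝ) * Real.log 2 ≤ Real.log α := by
      rcases J.eq_empty_or_nonempty with h0 | hne
      · rw [h0]
        simpa using Real.log_nonneg hα
      · have hmax := hJmem _ (J.max'_mem hne)
        have h1 : J ⊆ Finset.Icc 2 (J.max' hne) := fun j hj =>
          Finset.mem_Icc.2 ⟨(hJmem j hj).1, J.le_max' j hj⟩
        have h2 := Finset.card_le_card h1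
        rw [Nat.card_Icc] at h2
        have h3 : J.card ≤ J.max' hne := by omega
        have h4 : Real.log ((2 : ℝ) ^ (J.max' hne)) ≤ Real.log α :=
          Real.log_le_log (by positivity) hmax.2.2.le
        rw [Real.log_pow] at h4
        refine le_trans ?_ h4
        have : (J.card : ℝ) ≤ (J.max' hne : ℕ) := by exact_mod_cast h3
        gcongr
    rw [hl4, div_le_div_iff₀ (by norm_num) (by positivity)]
    linarith
  calc ∑ p ∈ s, evenTerm q m p ≤ J.card * (Real.log q / 2 * (y / (y ^ 2 - 1))) := hsum
    _ = (J.card : ℝ) / 2 * (Real.log q * (y / (y ^ 2 - 1))) := by ring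
    _ ≤ _ := by
      apply mul_le_mul_of_nonneg_right (le_min hJ1 hJ2)
      have : 0 ≤ y / (y ^ 2 - 1) := div_nonneg (by linarith) hy0.le
      positivity

lemma sum_evenTerm_gt_le (hm : 0 < m) {g : ℕ} (hg : 0 < g) (s : Finset ℕ)
    (hs : ∀ p ∈ s, p.Prime ∧ q < p ∧ gp q m p = g) :
    ∑ p ∈ s, evenTerm q m p
      ≤ m * g.totient * ((5 / 3 * Real.log q + 1.13) / (q : ℝ) ^ 2) := by
  have hq := (Fact.out : q.Prime)
  have hq2 : (2 : ℝ) ≤ q := by exact_mod_cast hq.two_le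
  have hmaps : ∀ p ∈ s, p / q ∈ Finset.Icc 1 (s.sup id) := by
    intro p hp
    have h1 : p ≤ s.sup id := Finset.le_sup (f := id) hp
    rw [Finset.mem_Icc]
    exact ⟨(Nat.one_le_div_iff hq.pos).2 (hs p hp).2.1.le, (Nat.div_le_self _ _).trans h1⟩
  rw [← Finset.sum_fiberwise_of_maps_to hmaps]
  calc ∑ j ∈ Finset.Icc 1 (s.sup id), ∑ p ∈ s with p / q = j, evenTerm q m p
      ≤ ∑ j ∈ Finset.Icc 1 (s.sup id),
          (m * g.totient : ℝ) * (Real.log (j * q) / ((j : ℝ) * q) ^ 2) := by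
        refine Finset.sum_le_sum fun j hj => ?_
        have hj1 : (1 : ℝ) ≤ j := by exact_mod_cast (Finset.mem_Icc.1 hj).1
        have hX : (2 : ℝ) ≤ j * q := by nlinarith
        have hcard : (s.filter fun p => p / q = j).card ≤ m * g.totient :=
          card_le_mul_totient hm hg _
            (fun p hp => (hs p (Finset.mem_filter.1 hp).1).2.2)
            (injOn_cast_of_div_eq j _ fun p hp => (Finset.mem_filter.1 hp).2)
        have hcard' : ((s.filter fun p => p / q = j).card : ℝ) ≤ m * g.totient := by
          exact_mod_cast hcard
        calc ∑ p ∈ s with p / q = j, evenTerm q m p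
            ≤ ∑ p ∈ s with p / q = j, Real.log (j * q) / ((j : ℝ) * q) ^ 2 := by
              refine Finset.sum_le_sum fun p hp => ?_
              obtain ⟨hp1, hp2⟩ := Finset.mem_filter.1 hp
              obtain ⟨h1, h2, h3⟩ := hs p hp1
              refine (evenTerm_le h1).trans (log_div_sq_sub_one_le_log_div_sq hX ?_)
              have h4 : p % q ≠ 0 := by
                intro h0
                rcases (Nat.dvd_prime h1).1 (Nat.dvd_of_mod_eq_zero h0) with h5 | h5
                · exact hq.one_lt.ne' h5
                · omega
              have h5 := Nat.div_add_mod p q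
              rw [hp2] at h5
              have h6 : j * q + 1 ≤ p := by
                rw [mul_comm]
                omega
              exact_mod_cast h6
          _ = (s.filter fun p => p / q = j).card * (Real.log (j * q) / ((j : ℝ) * q) ^ 2) := by
              rw [Finset.sum_const, nsmul_eq_mul]
          _ ≤ _ := by
              have : 0 ≤ Real.log (j * q) := Real.log_nonneg (by linarith)
              gcongr
    _ = (m * g.totient : ℝ) *
          ∑ j ∈ Finset.Icc 1 (s.sup id), Real.log (j * q) / ((j : ℝ) * q) ^ 2 := by
        rw [Finset.mul_sum]
    _ ≤ _ := by
        gcongr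
        exact sum_log_mul_div_sq_le q (by linarith) _

lemma sum_evenTerm_six_le_gp_le (hq2 : q ≠ 2) (s : Finset ℕ)
    (hs : ∀ p ∈ s, p.Prime ∧ q < p ∧ 6 ≤ gp q m p ∧ 2 ∣ gp q m p) :
    ∑ p ∈ s, evenTerm q m p ≤ (Real.log q + 1) / (2 * (q - 1)) / q := by
  have hq := (Fact.out : q.Prime)
  have hq2' : (2 : ℝ) ≤ q := by exact_mod_cast hq.two_le
  have h := sum_odd_log_div_le s q hq.two_le (hq.odd_of_ne_two hq2) (by
    intro p hp
    obtain ⟨h1, h2, -⟩ := hs p hp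
    have := hq.two_le
    exact ⟨h1.odd_of_ne_two (by omega), h2.le⟩)
  rw [le_div_iff₀ (by positivity)]
  refine le_trans ?_ h
  rw [Finset.sum_mul]
  refine Finset.sum_le_sum fun p hp => ?_
  obtain ⟨h1, h2, h3, k, hk⟩ := hs p hp
  have hp2 : (2 : ℝ) ≤ p := by exact_mod_cast h1.two_le
  have hpq : (q : ℝ) ≤ p := by exact_mod_cast h2.le
  have hl : 0 ≤ Real.log p := Real.log_nonneg (by linarith)
  have h0 : (0 : ℝ) < (p : ℝ) ^ 2 - 1 := by nlinarith
  rw [evenTerm_of_eq (by omega) hk]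
  have h4 : (p : ℝ) ^ 3 ≤ (p : ℝ) ^ k := pow_le_pow_right₀ (by linarith) (by omega)
  calc Real.log p / ((p : ℝ) ^ k - ((p : ℝ) ^ k)⁻¹) * q
      ≤ Real.log p / (((p : ℝ) ^ 2 - 1) * p) * p := by
        refine mul_le_mul ?_ hpq (by positivity) (by positivity)
        refine (log_div_pow_sub_inv_le hp2 (by omega)).trans ?_
        apply div_le_div_of_nonneg_left hl (by positivity)
        nlinarith
    _ = _ := by field_simp

end Classes

section NotTwoPow

variable {q m : ℕ} [Fact q.Prime]

lemma evenTerm_le_of_odd_factor {z : ℝ} (hm : 0 < m) (hz : 1 < z) (hzm : z ^ m = q) {p l k : ℕ}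
    (hp : p.Prime) (hl : Odd l) (hl1 : 1 < l) (hk : 0 < k) (hg : gp q m p = 2 * (l * k)) :
    evenTerm q m p ≤ 64 / 63 / z * (Real.log p / (p : ℝ) ^ k) := by
  have hp2 : (2 : ℝ) ≤ p := by exact_mod_cast hp.two_le
  have hl0 : 0 ≤ Real.log p := Real.log_nonneg (by linarith)
  have hlk : 3 ≤ l * k := by
    have h3 : 3 ≤ l := by
      obtain ⟨a, rfl⟩ := hl
      omega
    exact h3.trans (Nat.le_mul_of_pos_right l hk)
  rw [evenTerm_of_eq (by omega) hg]
  set X : ℝ := (p : ℝ) ^ (l * k) with hX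
  have hX8 : 8 ≤ X := by
    calc (8 : ℝ) = 2 ^ 3 := by norm_num
      _ ≤ 2 ^ (l * k) := pow_le_pow_right₀ (by norm_num) hlk
      _ ≤ X := by rw [hX]; gcongr
  have hzX : z * (p : ℝ) ^ k ≤ X := by
    apply le_of_pow_le_pow_left₀ hm.ne' (by positivity)
    have h1 : (q : ℝ) * (p : ℝ) ^ (m * k) ≤ (p : ℝ) ^ (m * (l * k)) := by
      exact_mod_cast mul_pow_le_pow_of_gp_eq hl hl1 hk hg
    rw [mul_pow, hzm, hX, ← pow_mul, ← pow_mul, mul_comm k m, mul_comm (l * k) m]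
    exact h1
  have hXinv : X⁻¹ ≤ X / 64 := by
    rw [inv_le_iff_one_le_mul₀ (by linarith)]
    nlinarith
  calc Real.log p / (X - X⁻¹) ≤ Real.log p / (63 / 64 * (z * (p : ℝ) ^ k)) := by
        apply div_le_div_of_nonneg_left hl0 (by positivity)
        linarith
    _ = _ := by field_simp

lemma card_gp_mod_four_eq_two_le {α : ℝ} (hm : 0 < m) (hα : 2 ≤ α) (s : Finset ℕ)
    (hs : ∀ p ∈ s, p < q ∧ gp q m p % 4 = 2 ∧ 4 ≤ gp q m p ∧ (gp q m p : ℝ) < α) :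
    (s.card : ℝ) ≤ m * α ^ 2 / 16 := by
  set r := ⌊(α - 2) / 4⌋₊ with hr
  have hr' : (r : ℝ) ≤ (α - 2) / 4 := Nat.floor_le (by linarith)
  have hmaps : ∀ p ∈ s, gp q m p / 4 ∈ Finset.range (r + 1) := by
    intro p hp
    obtain ⟨-, h2, -, h4⟩ := hs p hp
    rw [Finset.mem_range, Nat.lt_succ_iff]
    apply Nat.le_floor
    have h5 : 4 * (gp q m p / 4) + 2 = gp q m p := by omega
    have h6 : (4 : ℝ) * (gp q m p / 4 : ℕ) + 2 = gp q m p := by exact_mod_cast h5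
    linarith
  have hcard : s.card ≤ m * (r * (r + 1)) := by
    calc s.card = ∑ i ∈ Finset.range (r + 1), (s.filter fun p => gp q m p / 4 = i).card :=
          Finset.card_eq_sum_card_fiberwise hmaps
      _ ≤ ∑ i ∈ Finset.range (r + 1), m * (i * 2) := by
          refine Finset.sum_le_sum fun i _ => ?_
          have hfib : ∀ p ∈ s.filter fun p => gp q m p / 4 = i,
              p < q ∧ gp q m p = 2 * (2 * i + 1) ∧ 0 < i := by
            intro p hp
            obtain ⟨hp1, hp2⟩ := Finset.mem_filter.1 hp
            obtain ⟨h1, h2, h3, -⟩ := hs p hp1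
            exact ⟨h1, by omega, by omega⟩
          rcases Nat.eq_zero_or_pos i with rfl | hi
          · rw [Finset.card_eq_zero.2 (Finset.eq_empty_of_forall_notMem fun p hp =>
              lt_irrefl _ (hfib p hp).2.2)]
            exact Nat.zero_le _
          · refine (card_le_mul_totient (q := q) hm (g := 2 * (2 * i + 1)) (by omega) _
              (fun p hp => (hfib p hp).2.1)
              (injOn_cast_of_div_eq 0 _ fun p hp => Nat.div_eq_of_lt (hfib p hp).1)).trans ?_
            apply Nat.mul_le_mul_left
            rw [Nat.totient_mul (by simp), Nat.totient_two, one_mul]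
            have := Nat.totient_lt (2 * i + 1) (by omega)
            omega
      _ = m * (r * (r + 1)) := by
          rw [← Finset.mul_sum, ← Finset.sum_mul, Finset.sum_range_id_mul_two, Nat.add_sub_cancel,
            mul_comm r]
  have hcard' : (s.card : ℝ) ≤ m * (r * (r + 1)) := by exact_mod_cast hcard
  have h0 : (0 : ℝ) ≤ r := Nat.cast_nonneg r
  have h1 : (r : ℝ) * (r + 1) ≤ α ^ 2 / 16 := by nlinarith
  calc (s.card : ℝ) ≤ m * (r * (r + 1)) := hcard'
    _ ≤ m * (α ^ 2 / 16) := by gcongr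
    _ = _ := by ring

lemma mertens_remainder_le {x : ℝ} (hx : 98 ≤ x) :
    Real.log ⌊x⌋₊ + (Real.log ⌊x⌋₊ + 1) / ⌊x⌋₊ + Real.log 4 - 1
      + (Real.log (97 : ℕ) + 1) / (2 * (((97 : ℕ) : ℝ) - 1)) + 1 / 8 * Real.log x
      ≤ 9 / 8 * Real.log (2 * x) := by
  have hn : 98 ≤ ⌊x⌋₊ := Nat.le_floor (by exact_mod_cast hx)
  have hn' : (98 : ℝ) ≤ ⌊x⌋₊ := by exact_mod_cast hn
  have hnx : (⌊x⌋₊ : ℝ) ≤ x := Nat.floor_le (by linarith)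
  set n : ℝ := (⌊x⌋₊ : ℝ)
  have h2 := Real.log_two_lt_d9
  have h2' := Real.log_two_gt_d9
  have hl4 : Real.log 4 = 2 * Real.log 2 := by
    rw [show (4 : ℝ) = 2 ^ 2 by norm_num, Real.log_pow]
    norm_num
  have hl128 : Real.log 128 = 7 * Real.log 2 := by
    rw [show (128 : ℝ) = 2 ^ 7 by norm_num, Real.log_pow]
    norm_num
  have h98 : Real.log 98 ≤ Real.log 128 := Real.log_le_log (by norm_num) (by norm_num)
  have h97 : Real.log (97 : ℕ) ≤ Real.log 128 := Real.log_le_log (by norm_num) (by norm_num)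
  have hln : Real.log n ≤ Real.log 98 + (n - 98) / 98 := by
    have := log_add_div_le_log_add (show (0 : ℝ) < 98 by norm_num) (show 0 ≤ n - 98 by linarith)
    rw [add_sub_cancel] at this
    linarith
  have h3 : (Real.log n + 1) / n ≤ 0.06 := by
    rw [div_le_iff₀ (by linarith)]
    linarith
  have h4 : (Real.log (97 : ℕ) + 1) / (2 * (((97 : ℕ) : ℝ) - 1)) ≤ 0.031 := by
    rw [div_le_iff₀ (by norm_num)]
    push_cast at h97 ⊢
    linarith
  have h5 : Real.log n ≤ Real.log x := Real.log_le_log (by linarith) hnx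
  rw [Real.log_mul (by norm_num) (by linarith)]
  linarith

lemma sum_evenTerm_not_two_pow_le {z α : ℝ} (hm : 0 < m) (hz : 1 < z) (hzm : z ^ m = q)
    (hα : 14 ≤ α) (s : Finset ℕ)
    (hs : ∀ p ∈ s, p.Prime ∧ p < q ∧ 4 ≤ gp q m p ∧ 2 ∣ gp q m p ∧ (∀ j, gp q m p ≠ 2 ^ j) ∧
      (gp q m p : ℝ) < α) :
    ∑ p ∈ s, evenTerm q m p ≤ 8 / 7 * Real.log (m * α ^ 2) / z := by
  have hm' : (1 : ℝ) ≤ m := by exact_mod_cast hm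
  set x : ℝ := m * α ^ 2 / 2 with hx
  have hx98 : 98 ≤ x := by
    rw [hx]
    nlinarith
  set n := ⌊x⌋₊ with hn
  have hn98 : 98 ≤ n := Nat.le_floor (by exact_mod_cast hx98)
  have hsmall : ∀ p ∈ s, p.Prime → evenTerm q m p ≤ 64 / 63 / z * (Real.log p / p) ∧
      (gp q m p % 4 ≠ 2 → evenTerm q m p ≤ 64 / 63 / z * (Real.log p / ((p : ℝ) ^ 2 - 1))) := by
    intro p hp hpp
    have hp2 : (2 : ℝ) ≤ p := by exact_mod_cast hpp.two_le
    have hl0 : 0 ≤ Real.log p := Real.log_nonneg (by linarith)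
    obtain ⟨-, -, h3, h4, h5, -⟩ := hs p hp
    obtain ⟨a, l, hl, hal⟩ := Nat.exists_eq_two_pow_mul_odd (n := gp q m p) (by omega)
    have hl1 : 1 < l := by
      rcases hl with ⟨b, rfl⟩
      rcases Nat.eq_zero_or_pos b with rfl | hb
      · exact absurd (by simpa using hal) (h5 a)
      · omega
    obtain ⟨b, rfl⟩ : ∃ b, a = b + 1 := by
      refine ⟨a - 1, ?_⟩
      rcases Nat.eq_zero_or_pos a with rfl | ha
      · rw [hal] at h4
        obtain ⟨c, rfl⟩ := hl
        omega
      · omega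
    have hg : gp q m p = 2 * (l * 2 ^ b) := by rw [hal]; ring
    have key := evenTerm_le_of_odd_factor hm hz hzm hpp hl hl1 (by positivity) hg
    constructor
    · refine key.trans ?_
      have : (p : ℝ) ≤ (p : ℝ) ^ 2 ^ b := le_self_pow₀ (by linarith) (by positivity)
      gcongr
    · intro h6
      refine key.trans ?_
      have hb : 2 ≤ 2 ^ b := by
        rcases Nat.eq_zero_or_pos b with rfl | hb
        · obtain ⟨c, rfl⟩ := hl
          rw [hg] at h6
          omega
        · exact le_self_pow₀ (by norm_num) hb.ne'
      have : (p : ℝ) ^ 2 - 1 ≤ (p : ℝ) ^ 2 ^ b :=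
        (sub_le_self _ zero_le_one).trans (pow_le_pow_right₀ (by linarith) hb)
      have h0 : (0 : ℝ) < (p : ℝ) ^ 2 - 1 := by nlinarith
      gcongr
  have hz0 : 0 ≤ 64 / 63 / z := by positivity
  have hn' : (98 : ℝ) ≤ n := by exact_mod_cast hn98
  have hA : ∑ p ∈ s with p ≤ n, evenTerm q m p ≤ 64 / 63 / z *
      (Real.log n + (Real.log n + 1) / n + Real.log 4 - 1) := by
    calc ∑ p ∈ s with p ≤ n, evenTerm q m p
        ≤ ∑ p ∈ s with p ≤ n, 64 / 63 / z * (Real.log p / p) := by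
          refine Finset.sum_le_sum fun p hp => ?_
          have hp1 := (Finset.mem_filter.1 hp).1
          exact (hsmall p hp1 (hs p hp1).1).1
      _ = 64 / 63 / z * ∑ p ∈ s with p ≤ n, Real.log p / p := by rw [Finset.mul_sum]
      _ ≤ 64 / 63 / z * ∑ p ∈ n.primesLE, Real.log p / p := by
          apply mul_le_mul_of_nonneg_left _ hz0
          apply Finset.sum_le_sum_of_subset_of_nonneg
          · intro p hp
            obtain ⟨hp1, hp2⟩ := Finset.mem_filter.1 hp
            exact Nat.mem_primesLE.2 ⟨hp2, (hs p hp1).1⟩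
          · intro p _ _
            exact div_nonneg (Real.log_natCast_nonneg p) (Nat.cast_nonneg p)
      _ ≤ _ := mul_le_mul_of_nonneg_left (sum_log_primesLE_div_le (by omega)) hz0
  have hB : ∑ p ∈ s with ¬ p ≤ n ∧ gp q m p % 4 = 2, evenTerm q m p
      ≤ 64 / 63 / z * (1 / 8 * Real.log x) := by
    have hlx : 0 ≤ Real.log x := Real.log_nonneg (by linarith)
    have hc := card_gp_mod_four_eq_two_le (q := q) hm (show 2 ≤ α by linarith)
      (s.filter fun p => ¬ p ≤ n ∧ gp q m p % 4 = 2) (by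
        intro p hp
        obtain ⟨hp1, -, hp2⟩ := Finset.mem_filter.1 hp
        obtain ⟨-, h2, h3, -, -, h6⟩ := hs p hp1
        exact ⟨h2, hp2, h3, h6⟩)
    calc ∑ p ∈ s with ¬ p ≤ n ∧ gp q m p % 4 = 2, evenTerm q m p
        ≤ ∑ p ∈ s with ¬ p ≤ n ∧ gp q m p % 4 = 2, 64 / 63 / z * (Real.log x / x) := by
          refine Finset.sum_le_sum fun p hp => ?_
          obtain ⟨hp1, hp2, -⟩ := Finset.mem_filter.1 hp
          refine (hsmall p hp1 (hs p hp1).1).1.trans (mul_le_mul_of_nonneg_left ?_ hz0)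
          have hxp : x ≤ p := (Nat.lt_of_floor_lt (not_le.1 hp2)).le
          have he : Real.exp 1 ≤ x := by
            have := Real.exp_one_lt_d9
            linarith
          exact Real.log_div_self_antitoneOn he (he.trans hxp) hxp
      _ = (s.filter fun p => ¬ p ≤ n ∧ gp q m p % 4 = 2).card
            * (64 / 63 / z * (Real.log x / x)) := by rw [Finset.sum_const, nsmul_eq_mul]
      _ ≤ x / 8 * (64 / 63 / z * (Real.log x / x)) := by
          apply mul_le_mul_of_nonneg_right _ (by positivity)
          rw [hx]
          linarith
      _ = _ := by field_simp
  have hC : ∑ p ∈ s with ¬ p ≤ n ∧ ¬ gp q m p % 4 = 2, evenTerm q m p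
      ≤ 64 / 63 / z * ((Real.log (97 : ℕ) + 1) / (2 * (((97 : ℕ) : ℝ) - 1))) := by
    calc ∑ p ∈ s with ¬ p ≤ n ∧ ¬ gp q m p % 4 = 2, evenTerm q m p
        ≤ ∑ p ∈ s with ¬ p ≤ n ∧ ¬ gp q m p % 4 = 2,
            64 / 63 / z * (Real.log p / ((p : ℝ) ^ 2 - 1)) := by
          refine Finset.sum_le_sum fun p hp => ?_
          obtain ⟨hp1, -, hp2⟩ := Finset.mem_filter.1 hp
          exact (hsmall p hp1 (hs p hp1).1).2 hp2
      _ = 64 / 63 / z * ∑ p ∈ s with ¬ p ≤ n ∧ ¬ gp q m p % 4 = 2,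
            Real.log p / ((p : ℝ) ^ 2 - 1) := by rw [Finset.mul_sum]
      _ ≤ _ := by
          apply mul_le_mul_of_nonneg_left _ hz0
          apply sum_odd_log_div_le _ 97 (by norm_num) (by decide)
          intro p hp
          obtain ⟨hp1, hp2, -⟩ := Finset.mem_filter.1 hp
          exact ⟨(hs p hp1).1.odd_of_ne_two (by omega), by omega⟩
  have hsplit : ∑ p ∈ s, evenTerm q m p = ∑ p ∈ s with p ≤ n, evenTerm q m p
      + (∑ p ∈ s with ¬ p ≤ n ∧ gp q m p % 4 = 2, evenTerm q m p
        + ∑ p ∈ s with ¬ p ≤ n ∧ ¬ gp q m p % 4 = 2, evenTerm q m p) := by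
    rw [← Finset.sum_filter_add_sum_filter_not s (fun p => p ≤ n),
      ← Finset.sum_filter_add_sum_filter_not (s.filter fun p => ¬ p ≤ n)
        (fun p => gp q m p % 4 = 2), Finset.filter_filter, Finset.filter_filter]
  have hrem := mul_le_mul_of_nonneg_left (mertens_remainder_le hx98) hz0
  rw [← hn, show 2 * x = m * α ^ 2 by rw [hx]; ring] at hrem
  have e : 64 / 63 / z * (9 / 8 * Real.log (m * α ^ 2)) = 8 / 7 * Real.log (m * α ^ 2) / z := by
    ring
  rw [hsplit, ← e]
  linarith

end NotTwoPow

lemma log_bounds_of_le {q : ℝ} (hq : 29 ≤ q) :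
    3.366 ≤ Real.log q ∧ Real.log q ^ 2 ≤ 0.3914 * q ∧ Real.log q ≤ 0.1162 * q := by
  have h2 := Real.log_two_lt_d9
  have h2' := Real.log_two_gt_d9
  have hlo : 34 * Real.log 2 ≤ 7 * Real.log 29 := by
    have h : Real.log (2 ^ 34) ≤ Real.log (29 ^ 7) :=
      Real.log_le_log (by norm_num) (by norm_num)
    rw [Real.log_pow, Real.log_pow] at h
    exact_mod_cast h
  have hhi : 43 * Real.log 29 ≤ 209 * Real.log 2 := by
    have h : Real.log (29 ^ 43) ≤ Real.log (2 ^ 209) :=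
      Real.log_le_log (by norm_num) (by norm_num)
    rw [Real.log_pow, Real.log_pow] at h
    exact_mod_cast h
  have hmono : Real.log 29 ≤ Real.log q := Real.log_le_log (by norm_num) hq
  set r := √(q / 29) with hr
  have hr2 : r ^ 2 = q / 29 := Real.sq_sqrt (by positivity)
  have hr1 : 1 ≤ r := Real.one_le_sqrt.2 (by linarith)
  have hq' : q = 29 * r ^ 2 := by rw [hr2]; ring
  have hlog : Real.log q = Real.log 29 + 2 * Real.log r := by
    rw [hq', Real.log_mul (by norm_num) (by positivity), Real.log_pow]
    norm_num
  have hlr := Real.log_le_sub_one_of_pos (show 0 < r by linarith)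
  have hL : Real.log q ≤ 3.3691 * r := by linarith
  refine ⟨by linarith, ?_, ?_⟩
  · have : Real.log q ^ 2 ≤ (3.3691 * r) ^ 2 := pow_le_pow_left₀ (by linarith) hL 2
    nlinarith
  · nlinarith

/-- The contribution of the primes `p > q` with `gp q m p` equal to `2` or at least `6`. -/
noncomputable def tailBase (q m : ℕ) : ℝ :=
  m * ((5 / 3 * Real.log q + 1.13) / (q : ℝ) ^ 2) + (Real.log q + 1) / (2 * (q - 1)) / q

/-- The further contribution of the primes `p > q` with `gp q m p = 4`, and of `p = q - 2`. -/
noncomputable def tailFour (q m : ℕ) : ℝ :=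
  m * 2 * ((5 / 3 * Real.log q + 1.13) / (q : ℝ) ^ 2) + Real.log q / (((q : ℝ) - 2) ^ 2 - 1)

lemma tailBase_le {q m : ℕ} (hq : 29 ≤ q) : tailBase q m ≤
    (m * (5 / 3 * Real.log q + 1.13) + 0.518 * (Real.log q + 1)) / (q : ℝ) ^ 2 := by
  have hq' : (29 : ℝ) ≤ q := by exact_mod_cast hq
  have hL := (log_bounds_of_le hq').1
  have e : (m * (5 / 3 * Real.log q + 1.13) + 0.518 * (Real.log q + 1)) / (q : ℝ) ^ 2
      = m * ((5 / 3 * Real.log q + 1.13) / (q : ℝ) ^ 2)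
        + 0.518 * (Real.log q + 1) / (q : ℝ) ^ 2 := by ring
  rw [tailBase, e]
  refine add_le_add le_rfl ?_
  rw [div_div, div_le_div_iff₀ (by nlinarith) (by positivity)]
  have : (q : ℝ) ^ 2 ≤ 0.518 * (2 * (q - 1) * q) := by nlinarith
  nlinarith

lemma tailFour_le {q m : ℕ} (hq : 29 ≤ q) : tailFour q m ≤
    (m * 2 * (5 / 3 * Real.log q + 1.13) + 1.156 * Real.log q) / (q : ℝ) ^ 2 := by
  have hq' : (29 : ℝ) ≤ q := by exact_mod_cast hq
  have hL := (log_bounds_of_le hq').1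
  have e : (m * 2 * (5 / 3 * Real.log q + 1.13) + 1.156 * Real.log q) / (q : ℝ) ^ 2
      = m * 2 * ((5 / 3 * Real.log q + 1.13) / (q : ℝ) ^ 2)
        + 1.156 * Real.log q / (q : ℝ) ^ 2 := by ring
  rw [tailFour, e]
  refine add_le_add le_rfl ?_
  rw [div_le_div_iff₀ (by nlinarith) (by positivity)]
  have : (q : ℝ) ^ 2 ≤ 1.156 * (((q : ℝ) - 2) ^ 2 - 1) := by nlinarith
  nlinarith

lemma mul_div_sq_le {q c : ℝ} (hq : 29 ≤ q) (hc : 0 ≤ c) : c * q / q ^ 2 ≤ c / (q - 2.1) := by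
  rw [div_le_div_iff₀ (by positivity) (by linarith)]
  nlinarith [mul_nonneg hc (show 0 ≤ q by linarith)]

lemma tailBase_le_of_le {q m : ℕ} (hq : 29 ≤ q) (hm : (m : ℝ) ≤ 1.183 * Real.log q) :
    tailBase q m ≤ 1.053 / ((q : ℝ) - 2.1) := by
  have hq' : (29 : ℝ) ≤ q := by exact_mod_cast hq
  obtain ⟨h1, h2, h3⟩ := log_bounds_of_le hq'
  refine (tailBase_le hq).trans (le_trans ?_ (mul_div_sq_le hq' (by norm_num)))
  gcongr
  nlinarith [mul_le_mul_of_nonneg_right hm (show 0 ≤ 5 / 3 * Real.log q + 1.13 by linarith)]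

lemma tailBase_add_tailFour_one_le {q : ℕ} (hq : 29 ≤ q) :
    tailBase q 1 + tailFour q 1 ≤ 1.053 / ((q : ℝ) - 2.1) := by
  have hq' : (29 : ℝ) ≤ q := by exact_mod_cast hq
  obtain ⟨h1, h2, h3⟩ := log_bounds_of_le hq'
  refine (add_le_add (tailBase_le hq) (tailFour_le hq)).trans
    (le_trans ?_ (mul_div_sq_le hq' (by norm_num)))
  rw [← add_div]
  gcongr
  push_cast
  linarith

lemma tailBase_add_tailFour_le {q m : ℕ} (hq : 29 ≤ q) (hm : (m : ℝ) ≤ 0.8783 * Real.log q) :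
    tailBase q m + tailFour q m
      ≤ 1 / 2 * (Real.log q / ((q : ℝ) - 2)) + 1.053 / ((q : ℝ) - 2.1) := by
  have hq' : (29 : ℝ) ≤ q := by exact_mod_cast hq
  obtain ⟨h1, h2, h3⟩ := log_bounds_of_le hq'
  have h4 : 1.68 * (q : ℝ) / (q : ℝ) ^ 2 ≤ 1 / 2 * (Real.log q / ((q : ℝ) - 2)) := by
    rw [← mul_div_assoc, div_le_div_iff₀ (by positivity) (by linarith)]
    nlinarith
  refine (add_le_add (tailBase_le hq) (tailFour_le hq)).trans
    (le_trans ?_ (add_le_add h4 (mul_div_sq_le hq' (by norm_num))))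
  rw [← add_div, ← add_div]
  apply div_le_div_of_nonneg_right _ (by positivity)
  nlinarith [mul_le_mul_of_nonneg_right hm (show 0 ≤ 5 / 3 * Real.log q + 1.13 by linarith)]

/-- If `y ^ m < q` and `y` is large in terms of `log q`, then `m` is `O(log q)`. -/
lemma natCast_le_mul_log {q y c : ℝ} {m a b : ℕ} (hq : 1 < q) (hy : 1 < y)
    (hym : y ^ m = q - 1) (hab : (2 : ℝ) ^ b ≤ (y ^ 2) ^ a) (hc : 2 * a ≤ c * (b * 0.693147))
    (hc0 : 0 ≤ c) (ha : 0 < a) : (m : ℝ) ≤ c * Real.log q := by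
  have h2 := Real.log_two_gt_d9
  have hly : 0 < Real.log y := Real.log_pos hy
  have h1 : m * Real.log y ≤ Real.log q := by
    rw [← Real.log_pow, hym]
    have : 0 < y ^ m := by positivity
    exact Real.log_le_log (by linarith) (by linarith)
  have h3 : b * Real.log 2 ≤ 2 * a * Real.log y := by
    have := Real.log_le_log (by positivity) hab
    rw [← pow_mul, Real.log_pow, Real.log_pow] at this
    push_cast at this
    exact this
  have hb : (0 : ℝ) ≤ b := Nat.cast_nonneg b
  have ha' : (1 : ℝ) ≤ a := by exact_mod_cast ha
  have h4 : 1 ≤ c * Real.log y := by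
    have h5 : 2 * a ≤ c * (2 * a * Real.log y) := by
      refine hc.trans (mul_le_mul_of_nonneg_left (le_trans ?_ h3) hc0)
      gcongr
      linarith
    nlinarith
  have hm : (0 : ℝ) ≤ m := Nat.cast_nonneg m
  nlinarith

lemma tail_small_lt {q m : ℕ} (hq : q = 17 ∨ q = 19 ∨ q = 23) (hm : m ≤ 3) {β : ℝ} (hβ : 2 ≤ β)
    (hβq : 2 * β ≤ (q : ℝ) - 1) :
    tailBase q m + tailFour q m + 3.04 / ((2 : ℝ) ^ β - 1)
      < 1.053 / ((q : ℝ) - 2.1) + (q : ℝ) ^ 2 * Real.log 2 / (2 * ((2 : ℝ) ^ β - 1)) := by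
  have hm' : (m : ℝ) ≤ 3 := by exact_mod_cast hm
  have h2 := Real.log_two_lt_d9
  have h2' := Real.log_two_gt_d9
  have hL : Real.log q ≤ 3.4658 := by
    have h32 : Real.log 32 = 5 * Real.log 2 := by
      rw [show (32 : ℝ) = 2 ^ 5 by norm_num, Real.log_pow]
      norm_num
    have : Real.log q ≤ Real.log 32 := by
      apply Real.log_le_log
      · rcases hq with rfl | rfl | rfl <;> norm_num
      · rcases hq with rfl | rfl | rfl <;> norm_num
    linarith
  have hL0 : 0 ≤ Real.log q := Real.log_natCast_nonneg q
  have hβ4 : (4 : ℝ) ≤ (2 : ℝ) ^ β := by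
    calc (4 : ℝ) = (2 : ℝ) ^ (2 : ℝ) := by norm_num
      _ ≤ _ := Real.rpow_le_rpow_of_exponent_le (by norm_num) hβ
  have hβle : ∀ k : ℕ, β ≤ k → (2 : ℝ) ^ β ≤ 2 ^ k := fun k hk => by
    rw [← Real.rpow_natCast]
    exact Real.rpow_le_rpow_of_exponent_le (by norm_num) hk
  have e : (q : ℝ) ^ 2 * Real.log 2 / (2 * ((2 : ℝ) ^ β - 1)) - 3.04 / ((2 : ℝ) ^ β - 1)
      = ((q : ℝ) ^ 2 * Real.log 2 / 2 - 3.04) / ((2 : ℝ) ^ β - 1) := by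
    have : (2 : ℝ) ^ β - 1 ≠ 0 := by linarith
    field_simp
  have hml : m * (5 / 3 * Real.log q + 1.13) ≤ 3 * 6.907 :=
    mul_le_mul hm' (by linarith) (by linarith) (by norm_num)
  have key : ∀ A B C D E : ℝ, 0 < A → 0 < B → 0 < C →
      D ≤ ((q : ℝ) ^ 2 * Real.log 2 / 2 - 3.04) / ((2 : ℝ) ^ β - 1) →
      (q : ℝ) ^ 2 = A → 2 * ((q : ℝ) - 1) * q = B → ((q : ℝ) - 2) ^ 2 - 1 = C →
      (1.053 / ((q : ℝ) - 2.1) = E) → 3 * (3 * 6.907) / A + 4.4658 / B + 3.4658 / C < D + E →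
      tailBase q m + tailFour q m + 3.04 / ((2 : ℝ) ^ β - 1)
      < 1.053 / ((q : ℝ) - 2.1) + (q : ℝ) ^ 2 * Real.log 2 / (2 * ((2 : ℝ) ^ β - 1)) := by
    intro A B C D E hA hB hC hD eA eB eC eE hlt
    have e2 : tailBase q m + tailFour q m = 3 * (m * (5 / 3 * Real.log q + 1.13)) / A
        + (Real.log q + 1) / B + Real.log q / C := by
      rw [tailBase, tailFour, div_div, eA, eB, eC]
      ring
    have e3 : 3 * (m * (5 / 3 * Real.log q + 1.13)) / A ≤ 3 * (3 * 6.907) / A := by gcongr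
    have e4 : (Real.log q + 1) / B ≤ 4.4658 / B := by gcongr; linarith
    have e5 : Real.log q / C ≤ 3.4658 / C := by gcongr
    rw [e2, eE]
    linarith
  rcases hq with rfl | rfl | rfl
  · have hβ8 := hβle 8 (by norm_num at hβq ⊢; linarith)
    refine key 289 544 224 0.38 (1.053 / 14.9) (by norm_num) (by norm_num) (by norm_num) ?_
      (by norm_num) (by norm_num) (by norm_num) (by norm_num) (by norm_num)
    rw [le_div_iff₀ (by linarith)]
    norm_num at hβ8 ⊢
    linarith
  · have hβ9 := hβle 9 (by norm_num at hβq ⊢; linarith)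
    refine key 361 684 288 0.238 (1.053 / 16.9) (by norm_num) (by norm_num) (by norm_num) ?_
      (by norm_num) (by norm_num) (by norm_num) (by norm_num) (by norm_num)
    rw [le_div_iff₀ (by linarith)]
    norm_num at hβ9 ⊢
    linarith
  · have hβ11 := hβle 11 (by norm_num at hβq ⊢; linarith)
    refine key 529 1012 440 0.088 (1.053 / 20.9) (by norm_num) (by norm_num) (by norm_num) ?_
      (by norm_num) (by norm_num) (by norm_num) (by norm_num) (by norm_num)
    rw [le_div_iff₀ (by linarith)]
    norm_num at hβ11 ⊢
    linarith

lemma tailFour_nonneg {q m : ℕ} (hq : 5 ≤ q) : 0 ≤ tailFour q m := by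
  have hq' : (5 : ℝ) ≤ q := by exact_mod_cast hq
  have hL : 0 ≤ Real.log q := Real.log_natCast_nonneg q
  have h1 : 0 ≤ ((q : ℝ) - 2) ^ 2 - 1 := by nlinarith
  unfold tailFour
  positivity

lemma tail_lt {q m h : ℕ} (hq : q.Prime) (hq17 : 17 ≤ q) {y c β : ℝ} (hy : 1 < y)
    (hym : y ^ m = (q : ℝ) - 1) (hβ : 2 ≤ β) (hβq : 2 * β ≤ (q : ℝ) - 1) (hm : 0 < m)
    (hc : 0 ≤ c) (hc4 : 4 ∣ h → 1 / 2 ≤ c) (hlog : m ≠ 1 → Real.log q / (y ^ 2 - 1) < 0.76)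
    (hlog4 : m ≠ 1 → 4 ∣ h → 2 * (Real.log q / (y ^ 2 - 1)) < 0.76) :
    tailBase q m + (if 4 ∣ h then tailFour q m else 0) + 3.04 / ((2 : ℝ) ^ β - 1)
      < c * (Real.log q / (y ^ 2 - 1)) + 1.053 / ((q : ℝ) - 2.1)
        + (q : ℝ) ^ 2 * Real.log 2 / (2 * ((2 : ℝ) ^ β - 1)) := by
  have hq17' : (17 : ℝ) ≤ q := by exact_mod_cast hq17
  have hL0 : 0 ≤ Real.log q := Real.log_natCast_nonneg q
  have hy0 : 0 < y ^ 2 - 1 := by nlinarith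
  have h2 := Real.log_two_lt_d9
  have h2' := Real.log_two_gt_d9
  have hcL : 0 ≤ c * (Real.log q / (y ^ 2 - 1)) := by positivity
  rcases lt_or_ge q 29 with hq29 | hq29
  · have hq3 : q = 17 ∨ q = 19 ∨ q = 23 := by
      interval_cases q <;> first | omega | (exfalso; revert hq; norm_num)
    have hm3 : m ≤ 3 := by
      by_contra hm3
      have hl := hlog (by omega)
      rw [div_lt_iff₀ hy0] at hl
      have h17 : 49 * Real.log 2 ≤ 12 * Real.log 17 := by
        have h : Real.log (2 ^ 49) ≤ Real.log (17 ^ 12) :=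
          Real.log_le_log (by norm_num) (by norm_num)
        rw [Real.log_pow, Real.log_pow] at h
        exact_mod_cast h
      have h17' : Real.log 17 ≤ Real.log q := Real.log_le_log (by norm_num) hq17'
      have hy2 : 4.72 < y ^ 2 := by linarith
      have hy4 : y ^ 4 ≤ y ^ m := pow_le_pow_right₀ hy.le (by omega)
      have hq23 : (q : ℝ) ≤ 23 := by
        have : q ≤ 23 := by omega
        exact_mod_cast this
      rw [hym] at hy4
      nlinarith
    have := tail_small_lt hq3 hm3 hβ hβq
    have h4 := tailFour_nonneg (q := q) (m := m) (by omega)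
    split_ifs <;> linarith
  · have hq' : (29 : ℝ) ≤ q := by exact_mod_cast hq29
    have hL := (log_bounds_of_le hq').1
    have hβ4 : (4 : ℝ) ≤ (2 : ℝ) ^ β := by
      calc (4 : ℝ) = (2 : ℝ) ^ (2 : ℝ) := by norm_num
        _ ≤ _ := Real.rpow_le_rpow_of_exponent_le (by norm_num) hβ
    have hstrict : 3.04 / ((2 : ℝ) ^ β - 1)
        < (q : ℝ) ^ 2 * Real.log 2 / (2 * ((2 : ℝ) ^ β - 1)) := by
      rw [div_lt_div_iff₀ (by linarith) (by linarith)]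
      have h3 : 6.08 < (q : ℝ) ^ 2 * Real.log 2 := by nlinarith
      have := mul_lt_mul_of_pos_right h3 (show 0 < (2 : ℝ) ^ β - 1 by linarith)
      linarith
    suffices tailBase q m + (if 4 ∣ h then tailFour q m else 0)
        ≤ c * (Real.log q / (y ^ 2 - 1)) + 1.053 / ((q : ℝ) - 2.1) by linarith
    split_ifs with h4
    · rcases eq_or_ne m 1 with rfl | hm1
      · have := tailBase_add_tailFour_one_le hq29
        linarith
      · have hl := hlog4 hm1 h4
        rw [← mul_div_assoc, div_lt_iff₀ hy0] at hl
        have hy2 : 9.857 ≤ y ^ 2 := by linarith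
        have hm' := natCast_le_mul_log (c := 0.8783) (a := 7) (b := 23) (by linarith) hy hym
          (le_trans (by norm_num) (pow_le_pow_left₀ (by norm_num) hy2 7)) (by norm_num)
          (by norm_num) (by norm_num)
        refine (tailBase_add_tailFour_le hq29 hm').trans ?_
        have hyq : y ^ 2 ≤ y ^ m := pow_le_pow_right₀ hy.le (by omega)
        rw [hym] at hyq
        have hc' := hc4 h4
        have h0 : 0 ≤ Real.log q / ((q : ℝ) - 2) := div_nonneg hL0 (by linarith)
        have h5 : Real.log q / ((q : ℝ) - 2) ≤ Real.log q / (y ^ 2 - 1) :=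
          div_le_div_of_nonneg_left hL0 hy0 (by linarith)
        gcongr
    · have hm' : (m : ℝ) ≤ 1.183 * Real.log q := by
        rcases eq_or_ne m 1 with rfl | hm1
        · push_cast
          linarith
        · have hl := hlog hm1
          rw [div_lt_iff₀ hy0] at hl
          have hy2 : 5.4289 ≤ y ^ 2 := by linarith
          exact natCast_le_mul_log (a := 25) (b := 61) (by linarith) hy hym
            (le_trans (by norm_num) (pow_le_pow_left₀ (by norm_num) hy2 25)) (by norm_num)
            (by norm_num) (by norm_num)
      have := tailBase_le_of_le hq29 hm'
      linarith

lemma Smq_le_of_sum_evenTerm_le {q m : ℕ} (hq : 2 ≤ q) {C : ℝ}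
    (h : ∀ s : Finset ℕ, (∀ p ∈ s, p.Prime ∧ p ≠ q) → ∑ p ∈ s, evenTerm q m p ≤ C) :
    Smq q m ≤ C := by
  unfold Smq
  by_cases hs : Summable fun p : Nat.Primes => Sterm q m p
  · refine hs.tsum_le_of_sum_le fun s => ?_
    let e : Nat.Primes ↪ ℕ := ⟨fun p => (p : ℕ), Nat.Primes.coe_nat_injective⟩
    let t : Finset ℕ := s.map e
    have htp : ∀ p ∈ t, p.Prime := by
      intro p hp
      obtain ⟨a, -, rfl⟩ := Finset.mem_map.1 hp
      exact a.2
    calc ∑ i ∈ s, Sterm q m i = ∑ p ∈ t, Sterm q m p :=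
          (Finset.sum_map s e (Sterm q m)).symm
      _ = ∑ p ∈ t with p ≠ q, Sterm q m p :=
          (Finset.sum_filter_of_ne (p := fun p => p ≠ q) fun p _ hp hpq =>
            hp (by rw [Sterm, if_pos hpq])).symm
      _ ≤ ∑ p ∈ t with p ≠ q, evenTerm q m p :=
          Finset.sum_le_sum fun p hp => Sterm_le_evenTerm hq (htp p (Finset.mem_filter.1 hp).1)
      _ ≤ C := h _ fun p hp => ⟨htp p (Finset.mem_filter.1 hp).1, (Finset.mem_filter.1 hp).2⟩
  · rw [tsum_eq_zero_of_not_summable hs]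
    simpa using h ∅ (by simp)

lemma Smq_le {q m : ℕ} (hq : 2 ≤ q) : Smq q m ≤ 0.76 :=
  Smq_le_of_sum_evenTerm_le hq fun s hs =>
    (Finset.sum_le_sum fun p hp => evenTerm_le (hs p hp).1).trans
      (sum_primes_log_div_le s fun p hp => (hs p hp).1)

lemma evenTerm_nonneg {q m p : ℕ} (hp : p.Prime) : 0 ≤ evenTerm q m p := by
  have hp1 : (1 : ℝ) ≤ p := by exact_mod_cast hp.one_le
  have hl : 0 ≤ Real.log p := Real.log_nonneg hp1
  have h2 : 1 ≤ (p : ℝ) ^ 2 := one_le_pow₀ hp1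
  have h1 : 1 ≤ (p : ℝ) ^ (gp q m p / 2) := one_le_pow₀ hp1
  have h3 := inv_le_one_of_one_le₀ h1
  unfold evenTerm
  split_ifs
  · exact div_nonneg hl (by linarith)
  · exact div_nonneg hl (by linarith)
  · exact le_rfl

lemma exists_eq_two_pow_of_le_two_mul {g h : ℕ} {α : ℝ} (hgh : g ∣ h) (hg0 : g ≠ 0) (hg2 : 2 ∣ g)
    (hgα : (g : ℝ) < α) (hodd : ∀ p : ℕ, p.Prime → Odd p → p ∣ h → α ≤ 2 * p) :
    ∃ j, g = 2 ^ j := by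
  refine ⟨_, Nat.eq_prime_pow_of_unique_prime_dvd hg0 fun {d} hd hdg => ?_⟩
  rcases hd.eq_two_or_odd' with h2 | hdo
  · exact h2
  · have h1 : 2 * d ∣ g := (Nat.coprime_two_left.2 hdo).mul_dvd_of_dvd_of_dvd hg2 hdg
    have h2 : 2 * (d : ℝ) ≤ g := by exact_mod_cast Nat.le_of_dvd (Nat.pos_of_ne_zero hg0) h1
    have h3 := hodd d hd hdo (hdg.trans hgh)
    linarith

open scoped Classical in
lemma sum_evenTerm_le_add_tail {q m h : ℕ} (hq : q.Prime) (hq5 : 5 ≤ q) (hmh : m * h = q - 1)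
    (hm : 0 < m) (hν : 1 ≤ padicValNat 2 h) {y z α E₃ E₅ : ℝ} (hy : 1 < y)
    (hym : y ^ m = (q : ℝ) - 1) (hz : 1 < z) (hzm : z ^ m = q) (hα : 14 ≤ α)
    (hE₃ : 8 / 7 * Real.log (m * α ^ 2) / z ≤ E₃ ∨
      0 ≤ E₃ ∧ ∀ p : ℕ, p.Prime → Odd p → p ∣ h → α ≤ 2 * p)
    (hE₅ : Real.log q / (y ^ 2 - 1) ≤ E₅ ∨ 0 ≤ E₅ ∧ m = 1)
    (s : Finset ℕ) (hs : ∀ p ∈ s, p.Prime ∧ p ≠ q) :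
    ∑ p ∈ s, evenTerm q m p ≤
      min (((padicValNat 2 h : ℝ) - 1) / 2) (Real.log α / Real.log 4)
          * (Real.log q * (y / (y ^ 2 - 1)))
        + E₃ + E₅ + 3.04 / ((2 : ℝ) ^ (α / 2) - 1)
        + (tailBase q m + if 4 ∣ h then tailFour q m else 0) := by
  have : Fact q.Prime := ⟨hq⟩
  have hq2 : q ≠ 2 := by omega
  have hh : 0 < h := Nat.pos_of_ne_zero fun h0 => by subst h0; omega
  have hgh : ∀ p ∈ s, gp q m p ∣ h := fun p hp => gp_dvd hmh fun hd =>
    (hs p hp).2 ((Nat.prime_dvd_prime_iff_eq hq (hs p hp).1).1 hd).symm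
  have h1 : ∑ p ∈ s with p < q ∧ gp q m p = 2, evenTerm q m p ≤ E₅ := by
    rcases hE₅ with hE₅ | ⟨hE₅, rfl⟩
    · refine (sum_evenTerm_gp_two_le hm hy hym _ fun p hp => ?_).trans hE₅
      obtain ⟨hp, hp'⟩ := Finset.mem_filter.1 hp
      exact ⟨(hs p hp).1, hp'⟩
    · rwa [Finset.filter_false_of_mem fun p hp hp' =>
        not_gp_one_eq_two hq2 (by omega) (hs p hp).1 hp'.1 hp'.2, Finset.sum_empty]
  have h2 := sum_evenTerm_two_pow_lt_le hq2 hm hy hym hh hν (show 1 ≤ α by linarith)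
    (s.filter fun p => p < q ∧ p ≠ q - 2 ∧ ∃ j, 2 ≤ j ∧ gp q m p = 2 ^ j ∧ (gp q m p : ℝ) < α)
    fun p hp => by
      obtain ⟨hp, hp1, hp2, hp3⟩ := Finset.mem_filter.1 hp
      exact ⟨(hs p hp).1, hp1, hp2, hgh p hp, hp3⟩
  have h3 : ∑ p ∈ s with p < q ∧ 4 ≤ gp q m p ∧ 2 ∣ gp q m p ∧ (∀ j, gp q m p ≠ 2 ^ j) ∧
      (gp q m p : ℝ) < α, evenTerm q m p ≤ E₃ := by
    rcases hE₃ with hE₃ | ⟨hE₃, hodd⟩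
    · refine (sum_evenTerm_not_two_pow_le hm hz hzm hα _ fun p hp => ?_).trans hE₃
      obtain ⟨hp, hp'⟩ := Finset.mem_filter.1 hp
      exact ⟨(hs p hp).1, hp'⟩
    · rwa [Finset.filter_false_of_mem, Finset.sum_empty]
      rintro p hp ⟨-, hp4, hp2, hpow, hpα⟩
      obtain ⟨j, hj⟩ := exists_eq_two_pow_of_le_two_mul (hgh p hp) (by omega) hp2 hpα hodd
      exact hpow j hj
  have h4 := sum_evenTerm_le_gp_le (q := q) (m := m) (β := α / 2) (by linarith)
    (s.filter fun p => 4 ≤ gp q m p ∧ 2 ∣ gp q m p ∧ α ≤ gp q m p) fun p hp => by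
      obtain ⟨hp, hp1, hp2, hp3⟩ := Finset.mem_filter.1 hp
      exact ⟨(hs p hp).1, hp1, hp2, by linarith⟩
  have h5 := sum_evenTerm_gt_le hm two_pos
    (s.filter fun p => q < p ∧ gp q m p = 2) fun p hp => by
      obtain ⟨hp, hp'⟩ := Finset.mem_filter.1 hp
      exact ⟨(hs p hp).1, hp'⟩
  have h6 := sum_evenTerm_six_le_gp_le hq2
    (s.filter fun p => q < p ∧ 6 ≤ gp q m p ∧ 2 ∣ gp q m p) fun p hp => by
      obtain ⟨hp, hp'⟩ := Finset.mem_filter.1 hp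
      exact ⟨(hs p hp).1, hp'⟩
  have h7 : ∑ p ∈ s with q < p ∧ gp q m p = 4, evenTerm q m p
      + ∑ p ∈ s with p = q - 2 ∧ ∃ j, 2 ≤ j ∧ gp q m p = 2 ^ j, evenTerm q m p
      ≤ if 4 ∣ h then tailFour q m else 0 := by
    split_ifs with hh4
    · have h8 := sum_evenTerm_gt_le hm four_pos
        (s.filter fun p => q < p ∧ gp q m p = 4) fun p hp => by
          obtain ⟨hp, hp'⟩ := Finset.mem_filter.1 hp
          exact ⟨(hs p hp).1, hp'⟩
      have h9 := sum_evenTerm_sub_two_le (m := m) hq5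
        (s.filter fun p => p = q - 2 ∧ ∃ j, 2 ≤ j ∧ gp q m p = 2 ^ j) fun p hp => by
          obtain ⟨hp, hp', -⟩ := Finset.mem_filter.1 hp
          exact ⟨(hs p hp).1, hp'⟩
      rw [show Nat.totient 4 = 2 by decide] at h8
      exact add_le_add h8 h9
    · have e₁ : (s.filter fun p => q < p ∧ gp q m p = 4) = ∅ :=
        Finset.filter_false_of_mem fun p hp hp' => hh4 (hp'.2 ▸ hgh p hp)
      have e₂ : (s.filter fun p => p = q - 2 ∧ ∃ j, 2 ≤ j ∧ gp q m p = 2 ^ j) = ∅ := by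
        refine Finset.filter_false_of_mem ?_
        rintro p hp ⟨-, j, hj, hpj⟩
        exact hh4 ((pow_dvd_pow 2 hj).trans (hpj ▸ hgh p hp))
      rw [e₁, e₂, Finset.sum_empty, add_zero]
  rw [Nat.totient_two, Nat.cast_one, mul_one] at h5
  have hcover : ∑ p ∈ s, evenTerm q m p ≤
      ∑ p ∈ s with p < q ∧ gp q m p = 2, evenTerm q m p
      + ∑ p ∈ s with p < q ∧ p ≠ q - 2 ∧ ∃ j, 2 ≤ j ∧ gp q m p = 2 ^ j ∧ (gp q m p : ℝ) < α,
          evenTerm q m p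
      + ∑ p ∈ s with p < q ∧ 4 ≤ gp q m p ∧ 2 ∣ gp q m p ∧ (∀ j, gp q m p ≠ 2 ^ j) ∧
          (gp q m p : ℝ) < α, evenTerm q m p
      + ∑ p ∈ s with 4 ≤ gp q m p ∧ 2 ∣ gp q m p ∧ α ≤ gp q m p, evenTerm q m p
      + ∑ p ∈ s with q < p ∧ gp q m p = 2, evenTerm q m p
      + ∑ p ∈ s with q < p ∧ 6 ≤ gp q m p ∧ 2 ∣ gp q m p, evenTerm q m p
      + (∑ p ∈ s with q < p ∧ gp q m p = 4, evenTerm q m p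
        + ∑ p ∈ s with p = q - 2 ∧ ∃ j, 2 ≤ j ∧ gp q m p = 2 ^ j, evenTerm q m p) := by
    simp only [Finset.sum_filter, ← Finset.sum_add_distrib]
    refine Finset.sum_le_sum fun p hp => ?_
    obtain ⟨hpp, hpq⟩ := hs p hp
    have hnn : ∀ (P : Prop) [Decidable P], 0 ≤ if P then evenTerm q m p else 0 := fun P _ => by
      split_ifs
      · exact evenTerm_nonneg hpp
      · exact le_rfl
    have hle : ∀ (P : Prop) [Decidable P], P → evenTerm q m p ≤ if P then evenTerm q m p else 0 :=
      fun P _ hP => (if_pos hP).ge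
    have n1 := hnn (p < q ∧ gp q m p = 2)
    have n2 := hnn (p < q ∧ p ≠ q - 2 ∧ ∃ j, 2 ≤ j ∧ gp q m p = 2 ^ j ∧ (gp q m p : ℝ) < α)
    have n3 := hnn (p < q ∧ 4 ≤ gp q m p ∧ 2 ∣ gp q m p ∧ (∀ j, gp q m p ≠ 2 ^ j) ∧
      (gp q m p : ℝ) < α)
    have n4 := hnn (4 ≤ gp q m p ∧ 2 ∣ gp q m p ∧ α ≤ gp q m p)
    have n5 := hnn (q < p ∧ gp q m p = 2)
    have n6 := hnn (q < p ∧ 6 ≤ gp q m p ∧ 2 ∣ gp q m p)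
    have n7 := hnn (q < p ∧ gp q m p = 4)
    have n8 := hnn (p = q - 2 ∧ ∃ j, 2 ≤ j ∧ gp q m p = 2 ^ j)
    by_cases hg2 : gp q m p = 2
    · rcases hpq.lt_or_gt with hlt | hgt
      · have := hle _ (And.intro hlt hg2)
        linarith
      · have := hle _ (And.intro hgt hg2)
        linarith
    by_cases hg4 : 4 ≤ gp q m p ∧ 2 ∣ gp q m p
    · rcases hpq.lt_or_gt with hlt | hgt
      · rcases lt_or_ge (gp q m p : ℝ) α with hα' | hα'
        · by_cases hpow : ∃ j, gp q m p = 2 ^ j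
          · obtain ⟨j, hj⟩ := hpow
            have hj2 : 2 ≤ j := by
              by_contra hj2
              have : j = 0 ∨ j = 1 := by omega
              rcases this with rfl | rfl <;> omega
            by_cases hp2 : p = q - 2
            · have := hle (p = q - 2 ∧ ∃ j, 2 ≤ j ∧ gp q m p = 2 ^ j) ⟨hp2, j, hj2, hj⟩
              linarith
            · have := hle (p < q ∧ p ≠ q - 2 ∧ ∃ j, 2 ≤ j ∧ gp q m p = 2 ^ j ∧
                (gp q m p : ℝ) < α) ⟨hlt, hp2, j, hj2, hj, hα'⟩
              linarith
          · push Not at hpow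
            have := hle (p < q ∧ 4 ≤ gp q m p ∧ 2 ∣ gp q m p ∧ (∀ j, gp q m p ≠ 2 ^ j) ∧
              (gp q m p : ℝ) < α) ⟨hlt, hg4.1, hg4.2, hpow, hα'⟩
            linarith
        · have := hle (4 ≤ gp q m p ∧ 2 ∣ gp q m p ∧ α ≤ gp q m p) ⟨hg4.1, hg4.2, hα'⟩
          linarith
      · by_cases hg : gp q m p = 4
        · have := hle _ (And.intro hgt hg)
          linarith
        · have := hle (q < p ∧ 6 ≤ gp q m p ∧ 2 ∣ gp q m p) ⟨hgt, by omega, hg4.2⟩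
          linarith
    · have : evenTerm q m p = 0 := by rw [evenTerm, if_neg hg2, if_neg hg4]
      linarith
  rw [tailBase]
  linarith

lemma Smq_lt {q m h : ℕ} (hq : q.Prime) (hmh : m * h = q - 1) (h2h : 2 ∣ h)
    {y z α E₃ E₅ : ℝ} (hy : 1 < y) (hym : y ^ m = (q : ℝ) - 1) (hz : 1 < z) (hzm : z ^ m = q)
    (hα : 3 ≤ α) (hαq : α ≤ (q : ℝ) - 1)
    (hE₃ : 8 / 7 * Real.log (m * α ^ 2) / z ≤ E₃ ∨
      0 ≤ E₃ ∧ ∀ p : ℕ, p.Prime → Odd p → p ∣ h → α ≤ 2 * p)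
    (hE₅ : Real.log q / (y ^ 2 - 1) ≤ E₅ ∨ 0 ≤ E₅ ∧ m = 1) :
    Smq q m <
      min (((padicValNat 2 h : ℝ) - 1) / 2) (Real.log α / Real.log 4) * Real.log q / (y - 1)
        + E₃ + 1.053 / ((q : ℝ) - 2.1)
        + (q : ℝ) ^ 2 * Real.log 2 / (2 * ((2 : ℝ) ^ (α / 2) - 1)) + E₅ := by
  have hq5 : 4 ≤ q := by
    have : (4 : ℝ) ≤ q := by linarith
    exact_mod_cast this
  have hm : 0 < m := Nat.pos_of_ne_zero fun h0 => by subst h0; omega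
  have hh : h ≠ 0 := fun h0 => by subst h0; omega
  have hq5' : (4 : ℝ) ≤ q := by exact_mod_cast hq5
  have hm' : (1 : ℝ) ≤ m := by exact_mod_cast hm
  have hν : 1 ≤ padicValNat 2 h := one_le_padicValNat_of_dvd hh h2h
  have hL0 : 0 ≤ Real.log q := Real.log_natCast_nonneg q
  have hy0 : 0 < y ^ 2 - 1 := by nlinarith
  have h2 := Real.log_two_gt_d9
  have hl4 : Real.log 4 = 2 * Real.log 2 := by
    rw [show (4 : ℝ) = 2 ^ 2 by norm_num, Real.log_pow]
    norm_num
  have hlα : Real.log 2 ≤ Real.log α := Real.log_le_log (by norm_num) (by linarith)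
  have hβ : (2 : ℝ) ≤ (2 : ℝ) ^ (α / 2) := by
    calc (2 : ℝ) = (2 : ℝ) ^ (1 : ℝ) := by norm_num
      _ ≤ _ := Real.rpow_le_rpow_of_exponent_le (by norm_num) (by linarith)
  have hα₂ : 1 / 2 ≤ Real.log α / Real.log 4 := by
    rw [hl4, div_le_div_iff₀ (by norm_num) (by linarith)]
    linarith
  set c := min (((padicValNat 2 h : ℝ) - 1) / 2) (Real.log α / Real.log 4) with hc
  have hc0 : 0 ≤ c := by
    have : (1 : ℝ) ≤ padicValNat 2 h := by exact_mod_cast hν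
    exact le_min (by linarith) (by linarith)
  have hc4 : 4 ∣ h → 1 / 2 ≤ c := fun h4 => by
    have h5 : 2 ≤ padicValNat 2 h := (padicValNat_dvd_iff_le hh).1 h4
    have : (2 : ℝ) ≤ padicValNat 2 h := by exact_mod_cast h5
    exact le_min (by linarith) hα₂
  have hE₃0 : 0 ≤ E₃ := by
    rcases hE₃ with hE₃ | hE₃
    · refine le_trans ?_ hE₃
      have : 0 ≤ Real.log (m * α ^ 2) := Real.log_nonneg (by nlinarith)
      positivity
    · exact hE₃.1
  have hLy : 0 ≤ Real.log q / (y ^ 2 - 1) := by positivity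
  have hE₅0 : 0 ≤ E₅ := by
    rcases hE₅ with hE₅ | hE₅
    · exact hLy.trans hE₅
    · exact hE₅.1
  have hcy : c * Real.log q / (y - 1)
      = c * (Real.log q * (y / (y ^ 2 - 1))) + c * (Real.log q / (y ^ 2 - 1)) := by
    have e : y ^ 2 - 1 = (y + 1) * (y - 1) := by ring
    have h3 : y + 1 ≠ 0 := by linarith
    have h4 : y - 1 ≠ 0 := by linarith
    rw [e]
    field_simp
  have hcy0 : 0 ≤ c * Real.log q / (y - 1) := div_nonneg (by positivity) (by linarith)
  have hq21 : 0 < 1.053 / ((q : ℝ) - 2.1) := div_pos (by norm_num) (by linarith)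
  have hpow0 : 0 ≤ (q : ℝ) ^ 2 * Real.log 2 / (2 * ((2 : ℝ) ^ (α / 2) - 1)) := by
    apply div_nonneg (by positivity) (by linarith)
  have hS := Smq_le (q := q) (m := m) (by omega)
  rcases le_or_gt ((2 : ℝ) ^ (α / 2)) (1 + 0.45 * (q : ℝ) ^ 2) with hB | hB
  · have : 0.76 ≤ (q : ℝ) ^ 2 * Real.log 2 / (2 * ((2 : ℝ) ^ (α / 2) - 1)) := by
      rw [le_div_iff₀ (by linarith)]
      nlinarith
    linarith
  have hq17 : 17 ≤ q := by
    by_contra hlt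
    have hαn : ∀ k : ℕ, (q : ℝ) - 1 ≤ 2 * k → (2 : ℝ) ^ (α / 2) ≤ 2 ^ k := fun k hk => by
      rw [← Real.rpow_natCast]
      exact Real.rpow_le_rpow_of_exponent_le (by norm_num) (by linarith)
    have hcases : q = 5 ∨ q = 7 ∨ q = 11 ∨ q = 13 := by
      interval_cases q <;> first | omega | (exfalso; revert hq; norm_num)
    rcases hcases with rfl | rfl | rfl | rfl
    · have := hαn 2 (by norm_num)
      norm_num at this hB
      linarith
    · have := hαn 3 (by norm_num)
      norm_num at this hB
      linarith
    · have := hαn 5 (by norm_num)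
      norm_num at this hB
      linarith
    · have := hαn 6 (by norm_num)
      norm_num at this hB
      linarith
  have hq17' : (17 : ℝ) ≤ q := by exact_mod_cast hq17
  have hα14 : 14 ≤ α := by
    by_contra hlt
    have : (2 : ℝ) ^ (α / 2) ≤ 2 ^ (7 : ℝ) :=
      Real.rpow_le_rpow_of_exponent_le (by norm_num) (by linarith)
    have e : (2 : ℝ) ^ (7 : ℝ) = 128 := by norm_num
    nlinarith
  have hE₅m : m ≠ 1 → Real.log q / (y ^ 2 - 1) ≤ E₅ := fun hm1 =>
    hE₅.resolve_right fun h => hm1 h.2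
  by_cases hK : m ≠ 1 ∧ 0.76 ≤ Real.log q / (y ^ 2 - 1)
  · have := hE₅m hK.1
    linarith [hK.2]
  by_cases hK4 : (m ≠ 1 ∧ 4 ∣ h) ∧ 0.76 ≤ 2 * (Real.log q / (y ^ 2 - 1))
  · have h3 := hE₅m hK4.1.1
    have h4 : 1 / 2 * (Real.log q * (y / (y ^ 2 - 1))) ≤ c * (Real.log q * (y / (y ^ 2 - 1))) := by
      have : 0 ≤ Real.log q * (y / (y ^ 2 - 1)) := by positivity
      have := hc4 hK4.1.2
      gcongr
    have h5 : 1 / 2 * (Real.log q / (y ^ 2 - 1)) ≤ c * (Real.log q / (y ^ 2 - 1)) := by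
      have := hc4 hK4.1.2
      gcongr
    have h6 : Real.log q / (y ^ 2 - 1) ≤ Real.log q * (y / (y ^ 2 - 1)) := by
      rw [← mul_div_assoc]
      gcongr
      nlinarith
    linarith [hK4.2]
  have htail := tail_lt (m := m) (h := h) hq hq17 hy hym (β := α / 2) (by linarith) (by linarith)
    hm hc0 hc4 (fun hm1 => by
      by_contra hge
      exact hK ⟨hm1, not_lt.1 hge⟩)
    (fun hm1 h4 => by
      by_contra hge
      exact hK4 ⟨⟨hm1, h4⟩, not_lt.1 hge⟩)
  have hmain := Smq_le_of_sum_evenTerm_le (by omega) fun s hs =>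
    sum_evenTerm_le_add_tail hq (by omega) hmh hm hν hy hym hz hzm hα14 hE₃ hE₅ s hs
  rw [hcy]
  linarith

/-- Upper bound for `S(m,q)` (Lemma 20 of the paper): for `q` an odd prime,
`m ∣ (q−1)/2`, `h = (q−1)/m`, and `3 ≤ α ≤ q−1`,
`S(m,q) < α₁·log q/((q−1)^{1/m}−1) + (8/7)·log(m·α²)/q^{1/m} + 1.053/(q−2.1)
  + q²·log 2/(2(2^{α/2}−1)) + log q/((q−1)^{2/m}−1)`,
with `α₁ = min{(ν₂(h)−1)/2, log α/log 4}`; the second term can be dropped if `α` is at most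
twice the smallest odd prime factor of `h`, and the last term can be dropped if `m = 1`. -/
theorem statement18 (q m h : ℕ) (hq : q.Prime) (hq_odd : q ≠ 2) (hm : m ∣ (q - 1) / 2)
    (hh : h = (q - 1) / m) (α : ℝ) (hα : 3 ≤ α) (hα' : α ≤ (q : ℝ) - 1) :
    Smq q m <
      min (((padicValNat 2 h : ℝ) - 1) / 2) (Real.log α / Real.log 4) * Real.log q /
          (((q : ℝ) - 1) ^ ((1 : ℝ) / m) - 1)
        + (8 / 7) * Real.log (m * α ^ 2) / (q : ℝ) ^ ((1 : ℝ) / m)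
        + 1.053 / ((q : ℝ) - 2.1)
        + (q : ℝ) ^ 2 * Real.log 2 / (2 * ((2 : ℝ) ^ (α / 2) - 1))
        + Real.log q / (((q : ℝ) - 1) ^ ((2 : ℝ) / m) - 1) ∧
    ((∀ p : ℕ, p.Prime → Odd p → p ∣ h → α ≤ 2 * p) →
      Smq q m <
        min (((padicValNat 2 h : ℝ) - 1) / 2) (Real.log α / Real.log 4) * Real.log q /
            (((q : ℝ) - 1) ^ ((1 : ℝ) / m) - 1)
          + 1.053 / ((q : ℝ) - 2.1)
          + (q : ℝ) ^ 2 * Real.log 2 / (2 * ((2 : ℝ) ^ (α / 2) - 1))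
          + Real.log q / (((q : ℝ) - 1) ^ ((2 : ℝ) / m) - 1)) ∧
    (m = 1 →
      Smq q m <
        min (((padicValNat 2 h : ℝ) - 1) / 2) (Real.log α / Real.log 4) * Real.log q /
            (((q : ℝ) - 1) ^ ((1 : ℝ) / m) - 1)
          + (8 / 7) * Real.log (m * α ^ 2) / (q : ℝ) ^ ((1 : ℝ) / m)
          + 1.053 / ((q : ℝ) - 2.1)
          + (q : ℝ) ^ 2 * Real.log 2 / (2 * ((2 : ℝ) ^ (α / 2) - 1))) := by
  have hq3 : 3 ≤ q := by
    have := hq.two_le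
    omega
  have hqodd := hq.odd_of_ne_two hq_odd
  obtain ⟨k, hk⟩ := hm
  have hm0 : 0 < m := Nat.pos_of_ne_zero fun h0 => by
    subst h0
    omega
  have hmk : m * (2 * k) = q - 1 := by
    obtain ⟨a, ha⟩ := hqodd
    rw [Nat.mul_left_comm, ← hk]
    omega
  have hhk : h = 2 * k := by rw [hh, ← hmk, Nat.mul_div_cancel_left _ hm0]
  have hmh : m * h = q - 1 := by rw [hhk, hmk]
  have hq3' : (3 : ℝ) ≤ q := by exact_mod_cast hq3
  have hm' : (0 : ℝ) < m := by exact_mod_cast hm0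
  have hm1 : (0 : ℝ) < 1 / m := by positivity
  have hy : 1 < ((q : ℝ) - 1) ^ ((1 : ℝ) / m) := Real.one_lt_rpow (by linarith) hm1
  have hz : 1 < (q : ℝ) ^ ((1 : ℝ) / m) := Real.one_lt_rpow (by linarith) hm1
  have hym : (((q : ℝ) - 1) ^ ((1 : ℝ) / m)) ^ m = (q : ℝ) - 1 := by
    rw [one_div]
    exact Real.rpow_inv_natCast_pow (by linarith) hm0.ne'
  have hzm : ((q : ℝ) ^ ((1 : ℝ) / m)) ^ m = q := by
    rw [one_div]
    exact Real.rpow_inv_natCast_pow (by linarith) hm0.ne'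
  have hy2 : ((q : ℝ) - 1) ^ ((2 : ℝ) / m) = (((q : ℝ) - 1) ^ ((1 : ℝ) / m)) ^ 2 := by
    rw [← Real.rpow_natCast, ← Real.rpow_mul (by linarith)]
    congr 1
    push_cast
    ring
  rw [hy2]
  refine ⟨Smq_lt hq hmh ⟨k, hhk⟩ hy hym hz hzm hα hα' (Or.inl le_rfl) (Or.inl le_rfl),
    fun hodd => ?_, fun hm1 => ?_⟩
  · simpa only [add_zero] using
      Smq_lt (E₃ := 0) hq hmh ⟨k, hhk⟩ hy hym hz hzm hα hα' (Or.inr ⟨le_rfl, hodd⟩) (Or.inl le_rfl)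
  · simpa only [add_zero] using
      Smq_lt (E₅ := 0) hq hmh ⟨k, hhk⟩ hy hym hz hzm hα hα' (Or.inl le_rfl) (Or.inr ⟨le_rfl, hm1⟩)
end

section
/- There exists an absolute constant c₂ > 0 such that for every odd prime q and every divisor m of (q−1)/2, −S(m,q) ≤ c₂·(log q)³/(q^{1/m}·log log q). -/
open Filter Topology

/-- The function `(1 + log x) / x` is antitone on `[1, ∞)`. -/
lemma one_add_log_div_le {z w : ℝ} (hz : 1 ≤ z) (h : z ≤ w) :
    (1 + Real.log w) / w ≤ (1 + Real.log z) / z := by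
  have hz0 : 0 < z := by linarith
  have hw0 : 0 < w := by linarith
  have h1 : Real.log (w / z) ≤ w / z - 1 := Real.log_le_sub_one_of_pos (by positivity)
  rw [Real.log_div hw0.ne' hz0.ne'] at h1
  have h2 : 1 ≤ w / z := (one_le_div hz0).2 h
  have h3 : 0 ≤ Real.log z := Real.log_nonneg hz
  have h4 : 1 + Real.log w ≤ w / z * (1 + Real.log z) := by nlinarith
  rw [div_le_div_iff₀ hw0 hz0]
  calc (1 + Real.log w) * z ≤ w / z * (1 + Real.log z) * z := by gcongr
    _ = (1 + Real.log z) * w := by field_simp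

lemma log_div_sub_one_le {y : ℝ} (hy : 4 ≤ y) :
    Real.log y / (y - 1) ≤ 2 * ((1 + Real.log y) / y) := by
  have h3 : 0 ≤ Real.log y := Real.log_nonneg (by linarith)
  rw [← mul_div_assoc, div_le_div_iff₀ (by linarith) (by linarith)]
  nlinarith

/-- The size of the negative contribution of `p` with exponent `e`. -/
lemma mul_log_div_pow_sub_one_le {p e : ℕ} (hp : 2 ≤ p) (he : 2 ≤ e) :
    (e : ℝ) * Real.log p / ((p : ℝ) ^ e - 1)
      ≤ 2 * ((1 + Real.log ((p : ℝ) ^ e)) / (p : ℝ) ^ e) := by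
  have hp' : (2 : ℝ) ≤ p := by exact_mod_cast hp
  rw [← Real.log_pow]
  apply log_div_sub_one_le
  calc (4 : ℝ) = 2 ^ 2 := by norm_num
    _ ≤ (p : ℝ) ^ 2 := by gcongr
    _ ≤ (p : ℝ) ^ e := pow_le_pow_right₀ (by linarith) he

lemma mul_log_div_nonneg (p e : ℕ) : 0 ≤ (e : ℝ) * Real.log p / ((p : ℝ) ^ e - 1) := by
  rcases Nat.eq_zero_or_pos p with rfl | hp
  · simp
  · have : (1 : ℝ) ≤ (p : ℝ) ^ e := one_le_pow₀ (by exact_mod_cast hp)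
    exact div_nonneg (mul_nonneg (by positivity) (Real.log_natCast_nonneg p)) (by linarith)

lemma neg_Sterm_le (q m p : ℕ) (hq : 3 ≤ q) (hp : 2 ≤ p) :
    -Sterm q m p ≤ 0 ∨
      ∃ e : ℕ, 2 ≤ e ∧ -Sterm q m p ≤ (e : ℝ) * Real.log p / ((p : ℝ) ^ e - 1) ∧
        (gp q m p = 1 ∨ gp q m p = e + 1) := by
  have hp' : (2 : ℝ) ≤ p := by exact_mod_cast hp
  have hlog : 0 ≤ Real.log p := Real.log_natCast_nonneg p
  by_cases hpq : p = q
  · left; simp [Sterm, hpq]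
  by_cases h1 : gp q m p = 1
  · right
    refine ⟨q - 1, by omega, ?_, Or.inl h1⟩
    have := mul_log_div_nonneg p q
    simp only [Sterm, hpq, h1]
    rw [Nat.cast_sub (by omega)]
    norm_num
    linarith
  have hlast : 0 ≤ (if 4 ≤ gp q m p ∧ 2 ∣ gp q m p then
        Real.log p / ((p : ℝ) ^ (gp q m p / 2) - ((p : ℝ) ^ (gp q m p / 2))⁻¹)
      else 0) := by
    split_ifs
    · have h : (1 : ℝ) ≤ (p : ℝ) ^ (gp q m p / 2) := one_le_pow₀ (by linarith)
      have := inv_le_one_of_one_le₀ h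
      exact div_nonneg hlog (by linarith)
    · exact le_rfl
  by_cases h3 : 3 ≤ gp q m p
  · right
    refine ⟨gp q m p - 1, by omega, ?_, Or.inr (by omega)⟩
    have := mul_log_div_nonneg p (gp q m p)
    have h2 : gp q m p ≠ 2 := by omega
    rw [Sterm, if_neg hpq, if_neg h1, if_pos h3, if_neg h2, Nat.cast_sub (by omega)]
    push_cast
    linarith
  · left
    rw [Sterm, if_neg hpq, if_neg h1, if_neg h3]
    have : 0 ≤ (if gp q m p = 2 then Real.log p / ((p : ℝ) ^ 2 - 1) else 0) := by
      split_ifs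
      · exact div_nonneg hlog (by nlinarith)
      · exact le_rfl
    linarith

lemma lt_pow_of_gp_eq_one {q m p : ℕ} (hp : 2 ≤ p) (hm : m ≠ 0) (h : gp q m p = 1) :
    q < p ^ m := by
  have h1 : ((p ^ m : ℕ) : ZMod q) = ((1 : ℕ) : ZMod q) := by
    push_cast
    exact orderOf_eq_one_iff.1 h
  have h2 : 1 < p ^ m := Nat.one_lt_pow hm (by omega)
  rw [ZMod.natCast_eq_natCast_iff] at h1
  have h3 := (Nat.modEq_iff_dvd' h2.le).1 h1.symm
  have := Nat.le_of_dvd (by omega) h3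
  omega

lemma lt_two_mul_pow {q m p e : ℕ} (hq : q.Prime) (hp : 2 ≤ p) (hm : m ≠ 0) (he : e ≠ 0)
    (h : gp q m p = e + 1) : q < 2 * (p ^ e) ^ m := by
  have := Fact.mk hq
  have h1 : ((p : ZMod q) ^ m) ^ (e + 1) = 1 := by rw [← h]; exact pow_orderOf_eq_one _
  have h2 : (p : ZMod q) ^ m ≠ 1 := by
    intro h3
    have := orderOf_eq_one_iff.2 h3
    unfold gp at h
    omega
  have h3 : ∑ i ∈ Finset.range (e + 1), ((p : ZMod q) ^ m) ^ i = 0 := by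
    have := geom_sum_mul ((p : ZMod q) ^ m) (e + 1)
    rw [h1, sub_self] at this
    exact (mul_eq_zero.1 this).resolve_right (sub_ne_zero.2 h2)
  have h4 : q ∣ ∑ i ∈ Finset.range (e + 1), (p ^ m) ^ i := by
    rw [← ZMod.natCast_eq_zero_iff]
    push_cast
    exact h3
  have hx : 2 ≤ p ^ m := Nat.one_lt_pow hm (by omega)
  have h5 : ∑ i ∈ Finset.range e, (p ^ m) ^ i < (p ^ m) ^ e :=
    Nat.geomSum_lt hx (fun k hk => Finset.mem_range.1 hk)
  have h6 := Nat.le_of_dvd (by rw [Finset.sum_range_succ]; positivity) h4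
  rw [Finset.sum_range_succ] at h6
  rw [pow_right_comm]
  omega

/-- At most `g` primes `p` with `p ^ m < q` have `g_p = g`. -/
lemma card_gp_eq_le {q m g : ℕ} (hq : q.Prime) (hm : m ≠ 0) (hg : g ≠ 0) (T : Finset ℕ)
    (hT : ∀ p ∈ T, p.Prime ∧ p ^ m < q ∧ gp q m p = g) : T.card ≤ g := by
  classical
  have := Fact.mk hq
  have hmg : 0 < m * g := by positivity
  have hsub : ∀ x ∈ T ×ˢ Finset.Icc 1 m,
      (x.1 : ZMod q) ^ x.2 ∈ (Polynomial.nthRoots (m * g) (1 : ZMod q)).toFinset := by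
    rintro ⟨p, j⟩ hx
    obtain ⟨hp, -⟩ := Finset.mem_product.1 hx
    rw [Multiset.mem_toFinset, Polynomial.mem_nthRoots hmg]
    have h1 : ((p : ZMod q) ^ m) ^ g = 1 := by
      rw [← (hT p hp).2.2]; exact pow_orderOf_eq_one _
    simp only
    rw [← pow_mul, mul_comm, pow_mul, pow_mul, h1, one_pow]
  have hinj : Set.InjOn (fun x : ℕ × ℕ => (x.1 : ZMod q) ^ x.2)
      (T ×ˢ Finset.Icc 1 m : Finset (ℕ × ℕ)) := by
    rintro ⟨p, j⟩ hx ⟨p', j'⟩ hx' h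
    rw [Finset.mem_coe, Finset.mem_product, Finset.mem_Icc] at hx hx'
    obtain ⟨hp, hj1, hj⟩ := hx
    obtain ⟨hp', hj1', hj'⟩ := hx'
    simp only at hp hj hj1 hp' hj' hj1' h
    have hlt : p ^ j < q := (Nat.pow_le_pow_right (hT p hp).1.pos hj).trans_lt (hT p hp).2.1
    have hlt' : p' ^ j' < q := (Nat.pow_le_pow_right (hT p' hp').1.pos hj').trans_lt (hT p' hp').2.1
    have h2 : ((p ^ j : ℕ) : ZMod q) = ((p' ^ j' : ℕ) : ZMod q) := by push_cast; exact h
    rw [ZMod.natCast_eq_natCast_iff', Nat.mod_eq_of_lt hlt, Nat.mod_eq_of_lt hlt'] at h2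
    have hpp : p = p' := by
      have : p ∣ p' ^ j' := h2 ▸ dvd_pow_self p (by omega)
      exact (Nat.prime_dvd_prime_iff_eq (hT p hp).1 (hT p' hp').1).1
        ((hT p hp).1.dvd_of_dvd_pow this)
    subst hpp
    rw [Nat.pow_right_injective (hT p hp).1.two_le h2]
  have hcard := Finset.card_le_card_of_injOn _ hsub hinj
  have h3 := (Multiset.toFinset_card_le _).trans (Polynomial.card_nthRoots (m * g) (1 : ZMod q))
  rw [Finset.card_product, Nat.card_Icc, Nat.add_sub_cancel, mul_comm] at hcard
  exact Nat.le_of_mul_le_mul_left (hcard.trans h3) (Nat.pos_of_ne_zero hm)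

lemma card_gp_le {q m n : ℕ} (hq : q.Prime) (hm : m ≠ 0) (T : Finset ℕ)
    (hT : ∀ p ∈ T, p.Prime ∧ p ^ m < q ∧ 2 ≤ gp q m p ∧ gp q m p ≤ n + 1) :
    T.card ≤ 2 * n ^ 2 := by
  classical
  have h1 : ∀ p ∈ T, gp q m p ∈ Finset.Icc 2 (n + 1) := fun p hp =>
    Finset.mem_Icc.2 (hT p hp).2.2
  have h2 : T.card ≤ (n + 1) * (Finset.Icc 2 (n + 1)).card := by
    refine Finset.card_le_mul_card_image_of_maps_to h1 _ fun g hg => ?_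
    rw [Finset.mem_Icc] at hg
    refine le_trans (card_gp_eq_le hq hm (by omega : g ≠ 0) _ fun p hp => ?_) hg.2
    rw [Finset.mem_filter] at hp
    exact ⟨(hT p hp.1).1, (hT p hp.1).2.1, hp.2⟩
  rw [Nat.card_Icc] at h2
  have h3 : n + 1 + 1 - 2 = n := by omega
  rw [h3] at h2
  nlinarith [Nat.le_self_pow (two_ne_zero) n]

lemma log_div_le_sub {n : ℕ} (hn : 2 ≤ n) :
    Real.log n / ((n : ℝ) * (n - 1))
      ≤ (Real.log ((n - 1 : ℕ) : ℝ) + 2) / ((n - 1 : ℕ) : ℝ) - (Real.log n + 2) / n := by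
  obtain ⟨k, rfl⟩ : ∃ k, n = k + 1 := ⟨n - 1, by omega⟩
  have hk : (1 : ℝ) ≤ k := by exact_mod_cast (by omega : 1 ≤ k)
  have hk0 : (0 : ℝ) < k := by linarith
  simp only [Nat.add_sub_cancel]
  push_cast
  rw [add_sub_cancel_right]
  have h1 := Real.log_le_sub_one_of_pos (show (0 : ℝ) < (k + 1) / k by positivity)
  rw [Real.log_div (by positivity) hk0.ne'] at h1
  have h2 : ((k : ℝ) + 1) / k - 1 = 1 / k := by field_simp; ring
  rw [h2] at h1
  have h3 : ((k : ℝ) + 1) * (1 / k) ≤ 2 := by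
    rw [mul_one_div, div_le_iff₀ hk0]; linarith
  have h4 : ((k : ℝ) + 1) * (Real.log (k + 1) - Real.log k) ≤ 2 :=
    (mul_le_mul_of_nonneg_left h1 (by positivity)).trans h3
  rw [div_sub_div _ _ hk0.ne' (by positivity), mul_comm ((k : ℝ) + 1) k]
  gcongr
  nlinarith

lemma sum_log_div_le {N : ℕ} (hN : 2 ≤ N) (T : Finset ℕ) (hT : ∀ n ∈ T, N ≤ n) :
    ∑ n ∈ T, Real.log n / ((n : ℝ) * (n - 1))
      ≤ (Real.log ((N - 1 : ℕ) : ℝ) + 2) / ((N - 1 : ℕ) : ℝ) := by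
  have key : ∀ M, N ≤ M → ∑ n ∈ Finset.Ico N M, Real.log n / ((n : ℝ) * (n - 1))
      ≤ (Real.log ((N - 1 : ℕ) : ℝ) + 2) / ((N - 1 : ℕ) : ℝ)
        - (Real.log ((M - 1 : ℕ) : ℝ) + 2) / ((M - 1 : ℕ) : ℝ) := by
    intro M hM
    induction M, hM using Nat.le_induction with
    | base => simp
    | succ M hM ih =>
      rw [Finset.sum_Ico_succ_top hM]
      have := log_div_le_sub (hN.trans hM)
      simp only [Nat.add_sub_cancel]
      linarith
  have hnn : ∀ n : ℕ, 0 ≤ Real.log n / ((n : ℝ) * (n - 1)) := by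
    intro n
    rcases Nat.eq_zero_or_pos n with rfl | hn
    · simp
    · have : (1 : ℝ) ≤ n := by exact_mod_cast hn
      exact div_nonneg (Real.log_natCast_nonneg n) (mul_nonneg (by linarith) (by linarith))
  have hsub : T ⊆ Finset.Ico N (max N (T.sup id + 1)) := by
    intro n hn
    have : n ≤ T.sup id := Finset.le_sup (f := id) hn
    rw [Finset.mem_Ico]
    exact ⟨hT n hn, lt_of_lt_of_le (by omega) (le_max_right _ _)⟩
  refine (Finset.sum_le_sum_of_subset_of_nonneg hsub fun n _ _ => hnn n).trans ?_
  refine (key _ (le_max_left _ _)).trans (sub_le_self _ ?_)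
  exact div_nonneg (add_nonneg (Real.log_natCast_nonneg _) (by norm_num)) (Nat.cast_nonneg _)

lemma one_lt_log_of_three_le {x : ℝ} (hx : 3 ≤ x) : 1 < Real.log x := by
  rw [Real.lt_log_iff_exp_lt (by linarith)]
  linarith [Real.exp_one_lt_d9]

/-- Bounds for a single prime, where `r = q ^ (1 / m)`. -/
lemma neg_Sterm_bounds {q m p : ℕ} {r : ℝ} (hq : q.Prime) (hq3 : 3 ≤ q) (hm : m ≠ 0)
    (hr1 : 1 < r) (hrq : r ≤ q) (hrm : r ^ m = q) (hp : p.Prime) :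
    (r ≤ p → -Sterm q m p ≤ 8 * (Real.log p / ((p : ℝ) * (p - 1)))) ∧
    ((p : ℝ) < r → -Sterm q m p ≤ 8 * (Real.log q / r) ∧
      (-Sterm q m p ≤ 6 * (Real.log q / r) / r ∨
        ∃ e : ℕ, 1 ≤ e ∧ gp q m p = e + 1 ∧ (p : ℝ) ^ e < r ^ 2)) := by
  have hp2 : (2 : ℝ) ≤ p := by exact_mod_cast hp.two_le
  have hr0 : 0 < r := by linarith
  have hL : 1 < Real.log q := one_lt_log_of_three_le (by exact_mod_cast hq3)
  have hlr : Real.log r ≤ Real.log q := Real.log_le_log hr0 hrq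
  have hlr0 : 0 ≤ Real.log r := Real.log_nonneg hr1.le
  have hlogp : 0 ≤ Real.log p := Real.log_natCast_nonneg p
  have hpp : 0 < (p : ℝ) * (p - 1) := mul_pos (by linarith) (by linarith)
  rcases neg_Sterm_le q m p hq3 hp.two_le with h | ⟨e, he, hle, hgp⟩
  · refine ⟨fun _ => h.trans (mul_nonneg (by norm_num) (div_nonneg hlogp hpp.le)), fun _ => ?_⟩
    exact ⟨h.trans (by positivity), Or.inl (h.trans (by positivity))⟩
  have hle' := hle.trans (mul_log_div_pow_sub_one_le hp.two_le he)
  refine ⟨fun _ => ?_, fun hpr => ?_⟩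
  · have h1 : (p : ℝ) ^ 2 ≤ (p : ℝ) ^ e := pow_le_pow_right₀ (by linarith) he
    have h2 := one_add_log_div_le (by nlinarith : (1 : ℝ) ≤ (p : ℝ) ^ 2) h1
    rw [Real.log_pow _ 2] at h2
    have h3 : 1 ≤ 2 * Real.log p := by
      have := Real.log_le_log (by norm_num) hp2
      linarith [Real.log_two_gt_d9]
    have h4 : (1 + ((2 : ℕ) : ℝ) * Real.log p) / (p : ℝ) ^ 2
        ≤ 4 * (Real.log p / ((p : ℝ) * (p - 1))) := by
      rw [← mul_div_assoc]
      push_cast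
      apply div_le_div₀ (by linarith) (by linarith) hpp
      nlinarith
    linarith
  · have hg : gp q m p = e + 1 := by
      refine hgp.resolve_left fun h1 => ?_
      have h2 := lt_pow_of_gp_eq_one hp.two_le hm h1
      have h3 : (p : ℝ) ^ m < r ^ m := pow_lt_pow_left₀ hpr (by positivity) hm
      rw [hrm] at h3
      exact lt_asymm h2 (by exact_mod_cast h3)
    have hy : r ≤ 2 * (p : ℝ) ^ e := by
      have h1 := lt_two_mul_pow hq hp.two_le hm (by omega) hg
      have h2 : r ^ m < 2 * ((p : ℝ) ^ e) ^ m := by rw [hrm]; exact_mod_cast h1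
      have h3 : (2 : ℝ) ≤ 2 ^ m := le_self_pow₀ (by norm_num) hm
      refine le_of_lt (lt_of_pow_lt_pow_left₀ m (by positivity) (h2.trans_le ?_))
      rw [mul_pow]
      gcongr
    have hy0 : (0 : ℝ) < (p : ℝ) ^ e := by positivity
    constructor
    · have h1 := one_add_log_div_le hr1.le hy
      have h2 : Real.log ((p : ℝ) ^ e) ≤ Real.log (2 * (p : ℝ) ^ e) :=
        Real.log_le_log hy0 (by linarith)
      have h3 : (1 + Real.log ((p : ℝ) ^ e)) / (p : ℝ) ^ e
          ≤ 2 * ((1 + Real.log (2 * (p : ℝ) ^ e)) / (2 * (p : ℝ) ^ e)) := by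
        rw [← mul_div_assoc, mul_div_mul_left _ _ two_ne_zero]
        gcongr
      have h4 : (1 + Real.log r) / r ≤ 2 * (Real.log q / r) := by
        rw [← mul_div_assoc]
        gcongr
        linarith
      linarith
    · rcases le_or_gt (r ^ 2) ((p : ℝ) ^ e) with hc | hc
      · left
        have h1 := one_add_log_div_le (by nlinarith : (1 : ℝ) ≤ r ^ 2) hc
        rw [Real.log_pow _ 2] at h1
        have h2 : (1 + ((2 : ℕ) : ℝ) * Real.log r) / r ^ 2 ≤ 3 * (Real.log q / r) / r := by
          rw [← mul_div_assoc, div_div, ← sq]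
          push_cast
          gcongr
          linarith
        have h3 : 6 * (Real.log q / r) / r = 2 * (3 * (Real.log q / r) / r) := by ring
        linarith
      · exact Or.inr ⟨e, by omega, hg, hc⟩

lemma sum_neg_Sterm_le {q m : ℕ} {r : ℝ} (hq : q.Prime) (hq3 : 3 ≤ q) (hm : m ≠ 0)
    (hr1 : 1 < r) (hrq : r ≤ q) (hrm : r ^ m = q) (T : Finset ℕ) (hT : ∀ p ∈ T, p.Prime) :
    ∑ p ∈ T, -Sterm q m p ≤ 126 * (Real.log q ^ 3 / (r * Real.log (Real.log q))) := by
  classical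
  have hr0 : 0 < r := by linarith
  have hL : 1 < Real.log q := one_lt_log_of_three_le (by exact_mod_cast hq3)
  have hlr : Real.log r ≤ Real.log q := Real.log_le_log hr0 hrq
  set L := Real.log q with hLdef
  set l := Real.log L with hldef
  have hl : 0 < l := Real.log_pos hL
  have hlL : l ≤ L - 1 := Real.log_le_sub_one_of_pos (by linarith)
  set X : ℝ := L ^ 2 / l with hX
  have hX1 : 1 ≤ X := by rw [hX, one_le_div hl]; nlinarith
  have hlX : l + 1 ≤ Real.log X := by
    rw [hX, Real.log_div (by positivity) hl.ne', Real.log_pow]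
    have := Real.log_le_sub_one_of_pos hl
    push_cast
    linarith
  have hLr : 0 ≤ L / r := by positivity
  have hb := fun p hp => neg_Sterm_bounds (p := p) hq hq3 hm hr1 hrq hrm (hT p hp)
  rw [← hLdef] at hb
  set T₁ := T.filter fun p : ℕ => r ≤ (p : ℝ)
  set T₂ := T.filter fun p : ℕ => ¬ r ≤ (p : ℝ)
  set A := T₂.filter fun p : ℕ => (p : ℝ) ≤ X
  set B := T₂.filter fun p : ℕ => ¬ (p : ℝ) ≤ X
  set C := B.filter fun p : ℕ => -Sterm q m p ≤ 6 * (L / r) / r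
  set D := B.filter fun p : ℕ => ¬ -Sterm q m p ≤ 6 * (L / r) / r
  have hT₁ : ∑ p ∈ T₁, -Sterm q m p ≤ 48 * (L / r) := by
    have hN : 2 ≤ ⌈r⌉₊ := Nat.lt_ceil.2 (by exact_mod_cast hr1)
    have h1 : ∑ p ∈ T₁, -Sterm q m p ≤ 8 * ∑ p ∈ T₁, Real.log p / ((p : ℝ) * (p - 1)) := by
      rw [Finset.mul_sum]
      refine Finset.sum_le_sum fun p hp => ?_
      rw [Finset.mem_filter] at hp
      exact (hb p hp.1).1 hp.2
    have h2 := sum_log_div_le hN T₁ fun p hp => Nat.ceil_le.2 (Finset.mem_filter.1 hp).2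
    have h3 : (((⌈r⌉₊ - 1 : ℕ) : ℕ) : ℝ) = (⌈r⌉₊ : ℝ) - 1 := by
      rw [Nat.cast_sub (by omega), Nat.cast_one]
    have h4 : (1 : ℝ) ≤ (⌈r⌉₊ : ℝ) - 1 := by
      have : (2 : ℝ) ≤ (⌈r⌉₊ : ℝ) := by exact_mod_cast hN
      linarith
    have h5 := Nat.le_ceil r
    have h6 := Nat.ceil_lt_add_one hr0.le
    rw [h3] at h2
    have h7 : Real.log ((⌈r⌉₊ : ℝ) - 1) ≤ L :=
      (Real.log_le_log (by linarith) (by linarith)).trans hlr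
    have h8 : (Real.log ((⌈r⌉₊ : ℝ) - 1) + 2) / ((⌈r⌉₊ : ℝ) - 1) ≤ 3 * L / (r / 2) := by
      apply div_le_div₀ (by linarith) (by linarith) (by linarith) (by linarith)
    have h9 : 3 * L / (r / 2) = 6 * (L / r) := by field_simp; norm_num
    linarith
  have hA : ∑ p ∈ A, -Sterm q m p ≤ 8 * (L / r) * X := by
    have h1 : ∑ p ∈ A, -Sterm q m p ≤ A.card • (8 * (L / r)) := by
      refine Finset.sum_le_card_nsmul _ _ _ fun p hp => ?_
      have hp' := Finset.mem_filter.1 (Finset.mem_filter.1 hp).1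
      exact ((hb p hp'.1).2 (not_le.1 hp'.2)).1
    have h2 : A ⊆ Finset.Icc 1 ⌊X⌋₊ := fun p hp => by
      have hp' := Finset.mem_filter.1 hp
      exact Finset.mem_Icc.2 ⟨(hT p (Finset.mem_filter.1 hp'.1).1).one_le, Nat.le_floor hp'.2⟩
    have h3 : (A.card : ℝ) ≤ X := by
      have := Finset.card_le_card h2
      rw [Nat.card_Icc, Nat.add_sub_cancel] at this
      exact (Nat.cast_le.2 this).trans (Nat.floor_le (by linarith))
    rw [nsmul_eq_mul] at h1
    refine h1.trans ?_
    rw [mul_comm]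
    gcongr
  have hC : ∑ p ∈ C, -Sterm q m p ≤ 6 * (L / r) := by
    have h1 : ∑ p ∈ C, -Sterm q m p ≤ C.card • (6 * (L / r) / r) :=
      Finset.sum_le_card_nsmul _ _ _ fun p hp => (Finset.mem_filter.1 hp).2
    have h2 : C ⊆ Finset.Icc 1 ⌊r⌋₊ := fun p hp => by
      have hp' := Finset.mem_filter.1 (Finset.mem_filter.1 (Finset.mem_filter.1 hp).1).1
      exact Finset.mem_Icc.2 ⟨(hT p hp'.1).one_le, Nat.le_floor (not_le.1 hp'.2).le⟩
    have h3 : (C.card : ℝ) ≤ r := by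
      have := Finset.card_le_card h2
      rw [Nat.card_Icc, Nat.add_sub_cancel] at this
      exact (Nat.cast_le.2 this).trans (Nat.floor_le (by linarith))
    rw [nsmul_eq_mul] at h1
    calc _ ≤ (C.card : ℝ) * (6 * (L / r) / r) := h1
      _ ≤ r * (6 * (L / r) / r) := by gcongr
      _ = 6 * (L / r) := by field_simp
  have hD : ∑ p ∈ D, -Sterm q m p ≤ 64 * (L / r) * X := by
    have h1 : ∑ p ∈ D, -Sterm q m p ≤ D.card • (8 * (L / r)) := by
      refine Finset.sum_le_card_nsmul _ _ _ fun p hp => ?_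
      have hp' := Finset.mem_filter.1 (Finset.mem_filter.1 (Finset.mem_filter.1 hp).1).1
      exact ((hb p hp'.1).2 (not_le.1 hp'.2)).1
    set K : ℝ := 2 * L / (l + 1) with hK
    have hK0 : 0 ≤ K := by positivity
    have h2 : D.card ≤ 2 * ⌊K⌋₊ ^ 2 := by
      refine card_gp_le hq hm D fun p hp => ?_
      have hpD := Finset.mem_filter.1 hp
      have hpB := Finset.mem_filter.1 hpD.1
      have hp' := Finset.mem_filter.1 hpB.1
      have hpr : (p : ℝ) < r := not_le.1 hp'.2
      obtain ⟨e, he, hg, hlt⟩ := ((hb p hp'.1).2 hpr).2.resolve_left hpD.2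
      have hp0 : (0 : ℝ) < p := by exact_mod_cast (hT p hp'.1).pos
      refine ⟨hT p hp'.1, ?_, by omega, ?_⟩
      · have : (p : ℝ) ^ m < r ^ m := pow_lt_pow_left₀ hpr hp0.le hm
        rw [hrm] at this
        exact_mod_cast this
      · rw [hg]
        gcongr
        refine Nat.le_floor ?_
        have h3 := Real.log_lt_log (by positivity) hlt
        rw [Real.log_pow, Real.log_pow] at h3
        have h4 : l + 1 ≤ Real.log p :=
          hlX.trans (Real.log_le_log (by linarith) (not_le.1 hpB.2).le)
        rw [hK, le_div_iff₀ (by linarith)]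
        have h5 : (e : ℝ) * (l + 1) ≤ e * Real.log p := by gcongr
        push_cast at h3
        linarith
    have h3 : (D.card : ℝ) ≤ 2 * K ^ 2 := by
      have h4 : (D.card : ℝ) ≤ 2 * (⌊K⌋₊ : ℝ) ^ 2 := by exact_mod_cast h2
      refine h4.trans ?_
      gcongr
      exact Nat.floor_le hK0
    have h4 : K ^ 2 ≤ 4 * X := by
      rw [hK, hX, div_pow, ← mul_div_assoc, mul_pow]
      norm_num
      gcongr
      nlinarith
    rw [nsmul_eq_mul] at h1
    calc _ ≤ (D.card : ℝ) * (8 * (L / r)) := h1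
      _ ≤ (8 * X) * (8 * (L / r)) := by gcongr; linarith
      _ = 64 * (L / r) * X := by ring
  have e1 : ∑ p ∈ T₁, -Sterm q m p + ∑ p ∈ T₂, -Sterm q m p = ∑ p ∈ T, -Sterm q m p :=
    Finset.sum_filter_add_sum_filter_not _ _ _
  have e2 : ∑ p ∈ A, -Sterm q m p + ∑ p ∈ B, -Sterm q m p = ∑ p ∈ T₂, -Sterm q m p :=
    Finset.sum_filter_add_sum_filter_not _ _ _
  have e3 : ∑ p ∈ C, -Sterm q m p + ∑ p ∈ D, -Sterm q m p = ∑ p ∈ B, -Sterm q m p :=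
    Finset.sum_filter_add_sum_filter_not _ _ _
  have e4 : L ^ 3 / (r * l) = L / r * X := by rw [hX]; field_simp
  have e5 : L / r ≤ L / r * X := le_mul_of_one_le_right hLr hX1
  rw [e4]
  linarith

/-- There is an absolute constant `c₂ > 0` such that for every odd prime
`q` and every divisor `m` of `(q−1)/2`, `−S(m,q) ≤ c₂·(log q)³/(q^{1/m}·log log q)`. -/
theorem statement19 :
    ∃ c₂ : ℝ, 0 < c₂ ∧ ∀ q m : ℕ, q.Prime → q ≠ 2 → m ∣ (q - 1) / 2 →
      -Smq q m ≤ c₂ * Real.log q ^ 3 / ((q : ℝ) ^ ((1 : ℝ) / m) * Real.log (Real.log q)) := by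
  refine ⟨126, by norm_num, fun q m hq hq2 hmq => ?_⟩
  have hq3 : 3 ≤ q := by have := hq.two_le; omega
  have hm : m ≠ 0 := by
    rintro rfl
    have := Nat.eq_zero_of_zero_dvd hmq
    omega
  have hq1 : (1 : ℝ) < q := by exact_mod_cast hq.one_lt
  have hr1 : 1 < (q : ℝ) ^ ((1 : ℝ) / m) := Real.one_lt_rpow hq1 (by positivity)
  have hrm : ((q : ℝ) ^ ((1 : ℝ) / m)) ^ m = q := by
    rw [one_div]
    exact Real.rpow_inv_natCast_pow (by positivity) hm
  have hrq : (q : ℝ) ^ ((1 : ℝ) / m) ≤ q :=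
    (le_self_pow₀ hr1.le hm).trans_eq hrm
  have hL : 1 < Real.log q := one_lt_log_of_three_le (by exact_mod_cast hq3)
  have hl : 0 < Real.log (Real.log q) := Real.log_pos hL
  rw [mul_div_assoc, Smq, ← tsum_neg]
  by_cases hs : Summable fun p : Nat.Primes => -Sterm q m (p : ℕ)
  · refine hs.tsum_le_of_sum_le fun s => ?_
    have h := sum_neg_Sterm_le hq hq3 hm hr1 hrq hrm
      (s.map ⟨fun p : Nat.Primes => (p : ℕ), Nat.Primes.coe_nat_injective⟩) fun p hp => by
        obtain ⟨x, -, rfl⟩ := Finset.mem_map.1 hp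
        exact x.2
    rw [Finset.sum_map] at h
    exact h
  · rw [tsum_eq_zero_of_not_summable hs]
    positivity
end
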